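/- arXiv:1903.07278 — 6 statements merged into one kernel-verified Lean document; each statement's English description precedes it below -/
import Mathlib

section
/- If an element w of the Weyl group W satisfies w(Φ^+) = Φ^+, then w is the identity of V. -/
theorem aux_cone {V : Type*} [AddCommGroup V] [Module ℝ V] (f : Module.Dual ℝ V) (T : Set V)
    (hT : ∀ x ∈ T, 0 < f x) (z : V) (hz : z ∈ Submodule.span NNReal T) : z = 0 ∨ 0 < f z := by
  induction hz using Submodule.span_induction with
  | mem x hx => exact Or.inr (hT x hx)
  | zero => exact Or.inl rfl
  | add x y _ _ hx hy =>
    rcases hx with rfl | hx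
    · simpa using hy
    · rcases hy with rfl | hy
      · right; simpa using hx
      · right; rw [map_add]; positivity
  | smul a x _ hx =>
    rcases hx with rfl | hx
    · left; simp
    · rcases eq_or_ne a 0 with rfl | ha
      · left; simp
      · right
        rw [NNReal.smul_def, map_smul, smul_eq_mul]
        have : 0 < (a : ℝ) := by exact_mod_cast pos_iff_ne_zero.mpr ha
        positivity

theorem aux_cone_le {V : Type*} [AddCommGroup V] [Module ℝ V] (f : Module.Dual ℝ V) (T : Set V)
    (hT : ∀ x ∈ T, f x ≤ 0) (z : V) (hz : z ∈ Submodule.span NNReal T) : f z ≤ 0 := by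
  induction hz using Submodule.span_induction with
  | mem x hx => exact hT x hx
  | zero => simp
  | add x y _ _ hx hy => rw [map_add]; linarith
  | smul a x _ hx =>
    rw [NNReal.smul_def, map_smul, smul_eq_mul]
    exact mul_nonpos_of_nonneg_of_nonpos a.2 hx

/- STATEMENT 4: If an element `w` of the Weyl group `W` satisfies `w(Φ⁺) = Φ⁺`, then `w`
is the identity of `V`.

Here `Φ ⊆ V \ {0}` is a finite reduced root system spanning the finite-dimensional real
vector space `V`, `W` is the subgroup of `GL(V)` generated by the reflections `s_α`,
`f` is a linear functional nonvanishing on `Φ`, and `Φ⁺ := {α ∈ Φ | f α > 0}`. -/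
theorem weyl_fix_positive_system_eq_one
    (V : Type*) [AddCommGroup V] [Module ℝ V] [FiniteDimensional ℝ V]
    (Φ : Set V) (hfin : Φ.Finite) (h0 : (0 : V) ∉ Φ)
    (hspan : Submodule.span ℝ Φ = ⊤)
    (coroot : V → Module.Dual ℝ V)
    (hcoroot : ∀ α ∈ Φ, coroot α α = 2)
    (s : V → (V ≃ₗ[ℝ] V))
    (hs : ∀ α ∈ Φ, ∀ x : V, s α x = x - coroot α x • α)
    (hmaps : ∀ α ∈ Φ, ⇑(s α) '' Φ = Φ)
    (hred : ∀ α ∈ Φ, ∀ t : ℝ, t • α ∈ Φ → t = 1 ∨ t = -1)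
    (W : Subgroup (V ≃ₗ[ℝ] V)) (hW : W = Subgroup.closure (s '' Φ))
    (f : Module.Dual ℝ V) (hf : ∀ α ∈ Φ, f α ≠ 0)
    (Φplus : Set V) (hΦplus : Φplus = {α ∈ Φ | 0 < f α}) :
    ∀ w ∈ W, ⇑w '' Φplus = Φplus → w = 1 := by
  have hmem : ∀ α ∈ Φ, ∀ β ∈ Φ, s α β ∈ Φ := fun α hα β hβ => by
    rw [← hmaps α hα]; exact ⟨β, hβ, rfl⟩
  have hself : ∀ α ∈ Φ, s α α = -α := fun α hα => by
    rw [hs α hα, hcoroot α hα]; module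
  have hneg : ∀ α ∈ Φ, -α ∈ Φ := fun α hα => hself α hα ▸ hmem α hα α hα
  have hinv : ∀ α ∈ Φ, s α * s α = 1 := fun α hα => by
    ext x
    simp only [LinearEquiv.mul_apply, LinearEquiv.coe_one, id, hs α hα, map_sub, map_smul,
      hcoroot α hα, smul_eq_mul]
    module
  have hinv' : ∀ α ∈ Φ, (s α)⁻¹ = s α := fun α hα => inv_eq_of_mul_eq_one_left (hinv α hα)
  -- equivariance of coroots
  have hco : ∀ g : V ≃ₗ[ℝ] V, (∀ x ∈ Φ, g x ∈ Φ) → (∀ x ∈ Φ, g.symm x ∈ Φ) → ∀ α ∈ Φ, ∀ x,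
      coroot (g α) (g x) = coroot α x := by
    intro g hg hg' α hα x
    have key : coroot (g α) = (coroot α).comp (g.symm : V →ₗ[ℝ] V) := by
      apply Module.Dual.eq_of_preReflection_mapsTo (x := g α) hfin (by rw [hspan]) 
      · exact hcoroot _ (hg α hα)
      · intro y hy
        have := hmem _ (hg α hα) y hy
        rw [hs _ (hg α hα)] at this
        simpa [Module.preReflection_apply] using this
      · simp [hcoroot α hα]
      · intro y hy
        have := hg _ (hmem _ hα _ (hg' y hy))
        rw [hs _ hα] at this
        simpa [Module.preReflection_apply] using this
    rw [key]; simp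
  have hconj : ∀ g : V ≃ₗ[ℝ] V, (∀ x ∈ Φ, g x ∈ Φ) → (∀ x ∈ Φ, g.symm x ∈ Φ) → ∀ α ∈ Φ,
      s (g α) * g = g * s α := by
    intro g hg hg' α hα
    ext x
    simp only [LinearEquiv.mul_apply, hs α hα, hs _ (hg α hα), hco g hg hg' α hα, map_sub, map_smul]
  have hsymm : ∀ α ∈ Φ, ∀ x ∈ Φ, (s α).symm x ∈ Φ := fun α hα x hx => by
    have : (s α).symm = s α := hinv' α hα
    rw [this]; exact hmem α hα x hx
  -- positive roots
  have hpm : ∀ x, x ∈ Φplus ↔ x ∈ Φ ∧ 0 < f x := fun x => by rw [hΦplus]; rfl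
  have hpos : ∀ x ∈ Φ, x ∉ Φplus → -x ∈ Φplus := fun x hx h => by
    rw [hpm] at h ⊢
    refine ⟨hneg x hx, ?_⟩
    have := hf x hx
    rw [map_neg]
    by_contra h'
    exact h ⟨hx, lt_of_le_of_ne (by linarith) this.symm⟩
  have hpfin : Φplus.Finite := hfin.subset fun x hx => ((hpm x).1 hx).1
  -- simple roots
  obtain ⟨S, ⟨hSP, hPS⟩, hSmin⟩ : ∃ S, (S ⊆ Φplus ∧ Φplus ⊆ Submodule.span NNReal S) ∧
      ∀ T, T ⊆ S → Φplus ⊆ Submodule.span NNReal T → T = S := by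
    have hF : {S : Set V | S ⊆ Φplus ∧ Φplus ⊆ Submodule.span NNReal S}.Finite :=
      hpfin.finite_subsets.subset fun S hS => hS.1
    obtain ⟨S, hS⟩ := hF.exists_minimal ⟨Φplus, subset_rfl, Submodule.subset_span⟩
    refine ⟨S, hS.1, fun T hT hT' => ?_⟩
    exact le_antisymm hT (hS.2 ⟨hT.trans hS.1.1, hT'⟩ hT)
  have hSΦ : ∀ a ∈ S, a ∈ Φ := fun a ha => ((hpm a).1 (hSP ha)).1
  have hsimple : ∀ a ∈ S, ∀ b ∈ Φplus, b ≠ a → s a b ∈ Φplus := by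
    intro a ha b hb hba
    by_contra hn
    have haΦ := hSΦ a ha
    have hbΦ := ((hpm b).1 hb).1
    have hnb := hpos _ (hmem a haΦ b hbΦ) hn
    have hins : insert a (S \ {a}) = S := by simp [ha]
    have h1 := hPS hb
    have h2 := hPS hnb
    rw [← hins, SetLike.mem_coe, Submodule.mem_span_insert] at h1 h2
    obtain ⟨p, z, hz, hbz⟩ := h1
    obtain ⟨q, z', hz', hbz'⟩ := h2
    have hfa := ((hpm a).1 (hSP ha)).2
    have hT : ∀ x ∈ S \ {a}, 0 < f x := fun x hx => ((hpm x).1 (hSP hx.1)).2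
    rw [NNReal.smul_def] at hbz hbz'
    rw [hs a haΦ] at hbz'
    obtain ⟨t, ht⟩ : ∃ t : ℝ, z + z' = t • a := by
      refine ⟨coroot a b - p - q, ?_⟩
      have e1 : z = b - (p : ℝ) • a := by rw [hbz]; module
      have e2 : z' = -(b - coroot a b • a) - (q : ℝ) • a := by rw [hbz']; module
      rw [e1, e2]; module
    rcases le_or_gt t 0 with h | h
    · have hfz : f z + f z' = t * f a := by rw [← map_add, ht, map_smul, smul_eq_mul]
      have hle : t * f a ≤ 0 := mul_nonpos_of_nonpos_of_nonneg h hfa.le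
      have hz'0 : 0 ≤ f z' := by
        rcases aux_cone f _ hT z' hz' with h | h
        · simp [h]
        · exact h.le
      rcases aux_cone f _ hT z hz with h0 | h0
      · rw [h0, add_zero] at hbz
        rcases hred a haΦ p (hbz ▸ hbΦ) with h1 | h1
        · rw [h1, one_smul] at hbz; exact hba hbz
        · have := p.2
          have h1' : (p : ℝ) = -1 := h1
          have : (0 : ℝ) ≤ p := p.2
          linarith
      · linarith
    · have haT : a ∈ Submodule.span NNReal (S \ {a}) := by
        have h5 : Real.toNNReal t⁻¹ • (z + z') = a := by
          rw [NNReal.smul_def, ht, Real.coe_toNNReal _ (by positivity), smul_smul,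
            inv_mul_cancel₀ h.ne', one_smul]
        have h6 := Submodule.smul_mem _ (Real.toNNReal t⁻¹) (Submodule.add_mem _ hz hz')
        rwa [h5] at h6
      have hST : S ⊆ Submodule.span NNReal (S \ {a}) := fun x hx => by
        by_cases hxa : x = a
        · rw [hxa]; exact haT
        · exact Submodule.subset_span ⟨hx, hxa⟩
      have := hSmin (S \ {a}) Set.sdiff_subset
        (hPS.trans (Submodule.span_le.2 hST))
      rw [← this] at ha
      exact ha.2 rfl
  -- invariant form
  have hpair : ∀ b ∈ Φplus, ∃ a ∈ S, 0 < coroot a b := by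
    intro b hb
    have hbΦ := ((hpm b).1 hb).1
    by_contra! hcon
    let B : V → Module.Dual ℝ V := fun x => ∑ c ∈ hfin.toFinset, coroot c x • coroot c
    have hB : ∀ x y, B x y = ∑ c ∈ hfin.toFinset, coroot c x * coroot c y := fun x y => by
      simp [B, LinearMap.sum_apply]
    have hBpos : ∀ x ∈ Φ, 0 < B x x := fun x hx => by
      rw [hB]
      refine Finset.sum_pos' (fun c _ => mul_self_nonneg _) ⟨x, hfin.mem_toFinset.2 hx, ?_⟩
      rw [hcoroot x hx]; norm_num
    have hBinv : ∀ a ∈ Φ, ∀ x y, B (s a x) (s a y) = B x y := fun a ha x y => by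
      rw [hB, hB]
      symm
      refine Finset.sum_bij (fun c _ => s a c) ?_ ?_ ?_ ?_
      · intro c hc
        rw [hfin.mem_toFinset] at hc ⊢; exact hmem a ha c hc
      · intro c _ d _ h; exact (s a).injective h
      · intro c hc
        rw [hfin.mem_toFinset] at hc
        exact ⟨(s a).symm c, hfin.mem_toFinset.2 (hsymm a ha c hc), by simp⟩
      · intro c hc
        rw [hfin.mem_toFinset] at hc
        rw [hco (s a) (hmem a ha) (hsymm a ha) c hc, hco (s a) (hmem a ha) (hsymm a ha) c hc]
    have hBsymm : ∀ x y, B x y = B y x := fun x y => by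
      rw [hB, hB]; exact Finset.sum_congr rfl fun c _ => mul_comm _ _
    have hBco : ∀ a ∈ Φ, 2 * B b a = coroot a b * B a a := fun a ha => by
      have h := hBinv a ha b a
      rw [hself a ha, hBsymm, hBsymm b a, hs a ha, map_sub, map_smul, smul_eq_mul, hBsymm (-a) b,
        hBsymm (-a) a, map_neg, map_neg, hBsymm b a] at h
      rw [hBsymm b a]; linarith
    have := aux_cone_le (B b) S (fun a ha => by
      have h1 := hBco a (hSΦ a ha)
      have h2 := mul_nonpos_of_nonpos_of_nonneg (hcon a ha) (hBpos a (hSΦ a ha)).le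
      linarith) b (hPS hb)
    exact absurd (hBpos b hbΦ) (not_lt.2 this)
  -- generation by simple reflections
  have hgenpos : ∀ b ∈ Φplus, s b ∈ Subgroup.closure (s '' S) := by
    by_contra! hbad
    obtain ⟨b, ⟨hb, hbn⟩, hmin⟩ := Set.exists_min_image
      {b | b ∈ Φplus ∧ s b ∉ Subgroup.closure (s '' S)} f (hpfin.subset fun x hx => hx.1) hbad
    obtain ⟨a, ha, hab⟩ := hpair b hb
    have haΦ := hSΦ a ha
    have haW : s a ∈ Subgroup.closure (s '' S) := Subgroup.subset_closure ⟨a, ha, rfl⟩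
    by_cases hba : b = a
    · rw [hba] at hbn; exact hbn haW
    · have hc := hsimple a ha b hb hba
      have hbΦ := ((hpm b).1 hb).1
      have hlt : f (s a b) < f b := by
        rw [hs a haΦ, map_sub, map_smul, smul_eq_mul]
        have := mul_pos hab ((hpm a).1 (hSP ha)).2
        linarith
      have hcW : s (s a b) ∈ Subgroup.closure (s '' S) := by
        by_contra h
        exact absurd (hmin _ ⟨hc, h⟩) (not_le.2 hlt)
      have h := hconj (s a) (hmem a haΦ) (hsymm a haΦ) b hbΦ
      have : s b = (s a)⁻¹ * (s (s a b) * s a) := by rw [h]; group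
      rw [this] at hbn
      exact hbn (mul_mem (inv_mem haW) (mul_mem hcW haW))
  have hgen : ∀ b ∈ Φ, s b ∈ Subgroup.closure (s '' S) := by
    intro b hb
    by_cases h : b ∈ Φplus
    · exact hgenpos b h
    · have h1 := hconj (s b) (hmem b hb) (hsymm b hb) b hb
      rw [hself b hb] at h1
      rw [← mul_right_cancel h1]
      exact hgenpos _ (hpos b hb h)
  have hword : ∀ w ∈ W, ∃ l : List V, (∀ a ∈ l, a ∈ S) ∧ (l.map s).prod = w := by
    intro w hw
    have hw' : w ∈ Subgroup.closure (s '' S) := by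
      rw [hW] at hw
      refine (Subgroup.closure_le _).2 ?_ hw
      rintro _ ⟨b, hb, rfl⟩
      exact hgen b hb
    clear hw
    induction hw' using Subgroup.closure_induction with
    | mem x hx =>
      obtain ⟨a, ha, rfl⟩ := hx
      exact ⟨[a], by simpa using ha, by simp⟩
    | one => exact ⟨[], by simp, by simp⟩
    | mul x y _ _ hx hy =>
      obtain ⟨l, hl, rfl⟩ := hx
      obtain ⟨m, hm, rfl⟩ := hy
      refine ⟨l ++ m, fun a ha => ?_, by simp⟩
      rcases List.mem_append.1 ha with h | h
      · exact hl a h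
      · exact hm a h
    | inv x _ hx =>
      obtain ⟨l, hl, rfl⟩ := hx
      refine ⟨l.reverse, fun a ha => hl a (List.mem_reverse.1 ha), ?_⟩
      rw [List.prod_inv_reverse, List.map_reverse, List.map_map]
      congr 2
      exact List.map_congr_left fun a ha => (hinv' a (hSΦ a (hl a ha))).symm
  have hlistΦ : ∀ l : List V, (∀ a ∈ l, a ∈ S) → ∀ x ∈ Φ, (l.map s).prod x ∈ Φ := by
    intro l
    induction l with
    | nil => intro _ x hx; simpa using hx
    | cons b t ih =>
      intro hl x hx
      rw [List.map_cons, List.prod_cons, LinearEquiv.mul_apply]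
      exact hmem b (hSΦ b (hl b (by simp))) _ (ih (fun a ha => hl a (by simp [ha])) x hx)
  have hlistΦ' : ∀ l : List V, (∀ a ∈ l, a ∈ S) → ∀ x ∈ Φ, (l.map s).prod.symm x ∈ Φ := by
    intro l
    induction l with
    | nil => intro _ x hx; exact hx
    | cons b t ih =>
      intro hl x hx
      rw [List.map_cons, List.prod_cons]
      exact ih (fun a ha => hl a (by simp [ha])) _ (hsymm b (hSΦ b (hl b (by simp))) x hx)
  have hex : ∀ l : List V, (∀ a ∈ l, a ∈ S) → ∀ x ∈ Φ, x ∉ Φplus → (l.map s).prod x ∈ Φplus →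
      ∃ l1 b l2, l = l1 ++ b :: l2 ∧ (l2.map s).prod x = -b := by
    intro l
    induction l with
    | nil => intro _ x _ hx h; exact absurd (by simpa using h) hx
    | cons b t ih =>
      intro hl x hx hxn h
      have ht : ∀ a ∈ t, a ∈ S := fun a ha => hl a (by simp [ha])
      have hbS := hl b (by simp)
      by_cases h' : (t.map s).prod x ∈ Φplus
      · obtain ⟨l1, c, l2, h1, h2⟩ := ih ht x hx hxn h'
        exact ⟨b :: l1, c, l2, by simp [h1], h2⟩
      · refine ⟨[], b, t, rfl, ?_⟩
        rw [List.map_cons, List.prod_cons, LinearEquiv.mul_apply] at h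
        have hy := hpos _ (hlistΦ t ht x hx) h'
        by_contra hne
        have h3 := hsimple b hbS _ hy (fun e => hne (by rw [← e, neg_neg]))
        rw [map_neg, hpm, map_neg] at h3
        have := ((hpm _).1 h).2
        linarith [h3.2]
  have main : ∀ n : ℕ, ∀ l : List V, l.length = n → (∀ a ∈ l, a ∈ S) →
      (∀ x ∈ Φplus, (l.map s).prod x ∈ Φplus) → (l.map s).prod = 1 := by
    intro n
    induction n using Nat.strong_induction_on with
    | _ n ih =>
      intro l hn hl hP
      rcases List.eq_nil_or_concat l with rfl | ⟨l', a, rfl⟩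
      · simp
      · rw [List.concat_eq_append] at *
        have haS := hl a (by simp)
        have haΦ := hSΦ a haS
        have hl' : ∀ c ∈ l', c ∈ S := fun c hc => hl c (by simp [hc])
        have hna : -a ∉ Φplus := fun h => by
          have h1 := ((hpm _).1 h).2
          have h2 := ((hpm _).1 (hSP haS)).2
          rw [map_neg] at h1; linarith
        have hwa := hP a (hSP haS)
        rw [List.map_append, List.prod_append, LinearEquiv.mul_apply] at hwa
        simp only [List.map_cons, List.map_nil, List.prod_cons, List.prod_nil, mul_one,
          hself a haΦ] at hwa
        obtain ⟨l1, b, l2, h1, h2⟩ := hex l' hl' (-a) (hneg a haΦ) hna hwa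
        have hl2 : ∀ c ∈ l2, c ∈ S := fun c hc => hl' c (by simp [h1, hc])
        have hl1 : ∀ c ∈ l1, c ∈ S := fun c hc => hl' c (by simp [h1, hc])
        rw [map_neg, neg_inj] at h2
        have h3 := hconj _ (hlistΦ l2 hl2) (hlistΦ' l2 hl2) a haΦ
        rw [h2] at h3
        have h4 : ((l' ++ [a]).map s).prod = ((l1 ++ l2).map s).prod := by
          rw [h1]
          simp only [List.map_append, List.prod_append, List.map_cons, List.map_nil,
            List.prod_cons, List.prod_nil, mul_one]
          rw [h3, mul_assoc, mul_assoc, hinv a haΦ, mul_one]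
        rw [h4] at hP ⊢
        refine ih (l1 ++ l2).length ?_ (l1 ++ l2) rfl ?_ hP
        · rw [← hn, h1]; simp
        · intro c hc
          rcases List.mem_append.1 hc with h | h
          · exact hl1 c h
          · exact hl2 c h
  intro w hw hwP
  obtain ⟨l, hl, rfl⟩ := hword w hw
  exact main _ l rfl hl fun x hx => hwP ▸ ⟨x, hx, rfl⟩
end

section
/- For any two linear functionals f, f' : V → ℝ that are nonvanishing on Φ, there exists an element w of the Weyl group W such that w({α ∈ Φ : f(α) > 0}) = {α ∈ Φ : f'(α) > 0}; that is, W acts transitively on the positive systems of Φ cut out by generic linear functionals. -/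
/- STATEMENT 5: For any two linear functionals `f, f' : V → ℝ` that are nonvanishing on
`Φ`, there exists an element `w` of the Weyl group `W` such that
`w({α ∈ Φ | f α > 0}) = {α ∈ Φ | f' α > 0}`; that is, `W` acts transitively on the
positive systems of `Φ` cut out by generic linear functionals. -/
theorem weyl_transitive_on_positive_systems
    (V : Type*) [AddCommGroup V] [Module ℝ V] [FiniteDimensional ℝ V]
    (Φ : Set V) (hfin : Φ.Finite) (h0 : (0 : V) ∉ Φ)
    (hspan : Submodule.span ℝ Φ = ⊤)
    (coroot : V → Module.Dual ℝ V)
    (hcoroot : ∀ α ∈ Φ, coroot α α = 2)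
    (s : V → (V ≃ₗ[ℝ] V))
    (hs : ∀ α ∈ Φ, ∀ x : V, s α x = x - coroot α x • α)
    (hmaps : ∀ α ∈ Φ, ⇑(s α) '' Φ = Φ)
    (hred : ∀ α ∈ Φ, ∀ t : ℝ, t • α ∈ Φ → t = 1 ∨ t = -1)
    (W : Subgroup (V ≃ₗ[ℝ] V)) (hW : W = Subgroup.closure (s '' Φ)) :
    ∀ f f' : Module.Dual ℝ V, (∀ α ∈ Φ, f α ≠ 0) → (∀ α ∈ Φ, f' α ≠ 0) →
      ∃ w ∈ W, ⇑w '' {α ∈ Φ | 0 < f α} = {α ∈ Φ | 0 < f' α} := by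
  classical
  intro f f' hf hf'
  have hpres : ∀ w ∈ W, ∀ x, w x ∈ Φ ↔ x ∈ Φ := by
    intro w hw
    rw [hW] at hw
    induction hw using Subgroup.closure_induction with
    | mem w hw =>
      obtain ⟨α, hα, rfl⟩ := hw
      intro x
      conv_lhs => rw [← hmaps α hα]
      exact (s α).injective.mem_set_image
    | one => intro x; rfl
    | mul a b _ _ ha hb =>
      intro x
      rw [LinearEquiv.mul_apply, ha, hb]
    | inv a _ ha =>
      intro x
      rw [← ha (a⁻¹ x), ← LinearEquiv.mul_apply, mul_inv_cancel, LinearEquiv.coe_one, id_eq]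
  have : Fintype Φ := hfin.fintype
  let T : Set (Φ → Φ) := {p | ∃ w ∈ W, ∀ a : Φ, (p a : V) = w a}
  have hTne : T.Nonempty := ⟨id, 1, W.one_mem, fun a => rfl⟩
  obtain ⟨p, ⟨w, hw, hp⟩, hmax⟩ := Set.exists_max_image T
    (fun p => ∑ a : Φ, f (p a) * f' a) (Set.toFinite T) hTne
  have hmax' : ∀ u ∈ W, ∑ a : Φ, f (u a) * f' a ≤ ∑ a : Φ, f (w a) * f' a := by
    intro u hu
    have h := hmax (fun a => ⟨u a, (hpres u hu a).2 a.2⟩) ⟨u, hu, fun a => rfl⟩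
    simpa [hp] using h
  have hsW : ∀ β ∈ Φ, s β ∈ W := fun β hβ => by
    rw [hW]; exact Subgroup.subset_closure ⟨β, hβ, rfl⟩
  have key : ∀ β ∈ Φ, 0 ≤ f (w β) * f' β := by
    intro β hβ
    have hinv : ∑ a : Φ, coroot β (s β a) * f' (s β a) = ∑ a : Φ, coroot β a * f' a := by
      let e : Φ ≃ Φ := (s β).toEquiv.subtypeEquiv (fun a => (hpres _ (hsW β hβ) a).symm)
      exact Equiv.sum_comp e (fun a : Φ => coroot β a * f' a)
    have h1 : ∑ a : Φ, coroot β (s β a) * f' (s β a)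
        = - ∑ a : Φ, coroot β a * f' a + f' β * ∑ a : Φ, coroot β a * coroot β a := by
      rw [Finset.mul_sum, ← Finset.sum_neg_distrib, ← Finset.sum_add_distrib]
      refine Finset.sum_congr rfl fun a _ => ?_
      rw [hs β hβ]
      simp only [map_sub, map_smul, smul_eq_mul, hcoroot β hβ]
      ring
    have hc : 0 < ∑ a : Φ, coroot β a * coroot β a := by
      refine Finset.sum_pos' (fun a _ => mul_self_nonneg _) ⟨⟨β, hβ⟩, Finset.mem_univ _, ?_⟩
      simp [hcoroot β hβ]
    have h2 := hmax' (w * s β) (W.mul_mem hw (hsW β hβ))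
    have h3 : ∑ a : Φ, f ((w * s β) a) * f' a
        = ∑ a : Φ, f (w a) * f' a - f (w β) * ∑ a : Φ, coroot β a * f' a := by
      rw [Finset.mul_sum, ← Finset.sum_sub_distrib]
      refine Finset.sum_congr rfl fun a _ => ?_
      rw [LinearEquiv.mul_apply, hs β hβ]
      simp only [map_sub, map_smul, smul_eq_mul]
      ring
    have h4 : 0 ≤ f (w β) * f' β * ∑ a : Φ, coroot β a * coroot β a := by
      have h5 : f' β * ∑ a : Φ, coroot β a * coroot β a = 2 * ∑ a : Φ, coroot β a * f' a := by
        linarith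
      rw [mul_assoc, h5]
      linarith
    exact nonneg_of_mul_nonneg_left h4 hc
  have hiff : ∀ β ∈ Φ, (0 < f (w β) ↔ 0 < f' β) := by
    intro β hβ
    have h := lt_of_le_of_ne (key β hβ)
      (mul_ne_zero (hf _ ((hpres w hw β).2 hβ)) (hf' β hβ)).symm
    exact pos_iff_pos_of_mul_pos h
  refine ⟨w⁻¹, W.inv_mem hw, ?_⟩
  ext β
  constructor
  · rintro ⟨α, ⟨hα, hpos⟩, rfl⟩
    have hα' := (hpres _ (W.inv_mem hw) α).2 hα
    refine ⟨hα', (hiff _ hα').1 ?_⟩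
    rwa [← LinearEquiv.mul_apply, mul_inv_cancel, LinearEquiv.coe_one, id_eq]
  · rintro ⟨hβ, hpos⟩
    refine ⟨w β, ⟨(hpres w hw β).2 hβ, (hiff β hβ).2 hpos⟩, ?_⟩
    rw [← LinearEquiv.mul_apply, inv_mul_cancel, LinearEquiv.coe_one, id_eq]
end

section
/- Γ is the semidirect product of W^0 by Γ^1: the set Γ^1 is a subgroup of Γ, W^0 is a normal subgroup of Γ, W^0 ∩ Γ^1 = {1}, and every element g ∈ Γ factors uniquely as g = u·v with u ∈ W^0 and v ∈ Γ^1. -/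
theorem Gamma_semidirect_product
    (V : Type*) [AddCommGroup V] [Module ℝ V] [FiniteDimensional ℝ V]
    (Φ : Set V) (hfin : Φ.Finite) (h0 : (0 : V) ∉ Φ)
    (hspan : Submodule.span ℝ Φ = ⊤)
    (coroot : V → Module.Dual ℝ V)
    (hcoroot : ∀ α ∈ Φ, coroot α α = 2)
    (s : V → (V ≃ₗ[ℝ] V))
    (hs : ∀ α ∈ Φ, ∀ x : V, s α x = x - coroot α x • α)
    (hmaps : ∀ α ∈ Φ, ⇑(s α) '' Φ = Φ)
    (hred : ∀ α ∈ Φ, ∀ t : ℝ, t • α ∈ Φ → t = 1 ∨ t = -1)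
    (Γ : Subgroup (V ≃ₗ[ℝ] V)) (hΓ : ∀ g ∈ Γ, ⇑g '' Φ = Φ)
    (Φ0 : Set V) (hΦ0 : Φ0 = {α ∈ Φ | s α ∈ Γ})
    (W0 : Subgroup (V ≃ₗ[ℝ] V)) (hW0 : W0 = Subgroup.closure (s '' Φ0))
    (f : Module.Dual ℝ V) (hf : ∀ α ∈ Φ0, f α ≠ 0)
    (Φ0plus : Set V) (hΦ0plus : Φ0plus = {α ∈ Φ0 | 0 < f α})
    (Γ1 : Set (V ≃ₗ[ℝ] V)) (hΓ1 : Γ1 = {g | g ∈ Γ ∧ ⇑g '' Φ0plus = Φ0plus}) :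
    -- Γ¹ is a subgroup (of Γ):
    ((1 : V ≃ₗ[ℝ] V) ∈ Γ1 ∧ (∀ a ∈ Γ1, ∀ b ∈ Γ1, a * b ∈ Γ1) ∧ (∀ a ∈ Γ1, a⁻¹ ∈ Γ1)) ∧
    -- W⁰ is a normal subgroup of Γ:
    (W0 ≤ Γ ∧ ∀ g ∈ Γ, ∀ w ∈ W0, g * w * g⁻¹ ∈ W0) ∧
    -- W⁰ ∩ Γ¹ = {1}:
    (∀ x : V ≃ₗ[ℝ] V, x ∈ W0 → x ∈ Γ1 → x = 1) ∧
    -- unique factorization g = u * v with u ∈ W⁰, v ∈ Γ¹: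
    (∀ g ∈ Γ, ∃! p : (V ≃ₗ[ℝ] V) × (V ≃ₗ[ℝ] V),
      p.1 ∈ W0 ∧ p.2 ∈ Γ1 ∧ g = p.1 * p.2) := by
  classical
  -- basic facts
  have hΦ0Φ : ∀ α ∈ Φ0, α ∈ Φ := by
    intro α h; rw [hΦ0] at h; exact h.1
  have hΦ0Γ : ∀ α ∈ Φ0, s α ∈ Γ := by
    intro α h; rw [hΦ0] at h; exact h.2
  have hgΦ : ∀ g ∈ Γ, ∀ x ∈ Φ, g x ∈ Φ := by
    intro g hg x hx
    rw [← hΓ g hg]; exact ⟨x, hx, rfl⟩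
  have hcor : ∀ g ∈ Γ, ∀ α ∈ Φ, ∀ x, coroot (g α) (g x) = coroot α x := by
    intro g hg α hα x
    have key : coroot (g α) = (coroot α).comp (g⁻¹ : V ≃ₗ[ℝ] V).toLinearMap := by
      refine Module.Dual.eq_of_preReflection_mapsTo hfin hspan (x := g α)
        (hcoroot _ (hgΦ g hg α hα)) ?_ ?_ ?_
      · intro y hy
        have h1 := hs _ (hgΦ g hg α hα) y
        have h2 : s (g α) y ∈ Φ := by
          rw [← hmaps _ (hgΦ g hg α hα)]; exact ⟨y, hy, rfl⟩
        rw [h1] at h2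
        simpa [Module.preReflection_apply] using h2
      · have : g⁻¹ (g α) = α := g.symm_apply_apply α
        simp [this, hcoroot α hα]
      · intro y hy
        have h3 : g⁻¹ y ∈ Φ := hgΦ _ (Γ.inv_mem hg) y hy
        have h2 : s α (g⁻¹ y) ∈ Φ := by
          exact (hmaps _ hα).subset ⟨_, h3, rfl⟩
        have h4 := hgΦ g hg _ h2
        rw [hs α hα, map_sub, map_smul] at h4
        have : g (g⁻¹ y) = y := g.apply_symm_apply y
        rw [this] at h4
        simpa [Module.preReflection_apply] using h4
    rw [key]
    have : g⁻¹ (g x) = x := g.symm_apply_apply x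
    simp [this]
  have hconj : ∀ g ∈ Γ, ∀ α ∈ Φ, g * s α * g⁻¹ = s (g α) := by
    intro g hg α hα
    rw [mul_inv_eq_iff_eq_mul]
    ext x
    simp only [LinearEquiv.mul_apply]
    rw [hs α hα, hs _ (hgΦ g hg α hα), hcor g hg α hα]
    simp
  have hgΦ0 : ∀ g ∈ Γ, ∀ α ∈ Φ0, g α ∈ Φ0 := by
    intro g hg α hα
    have h1 := hΦ0Φ α hα
    have h2 := hΦ0Γ α hα
    rw [hΦ0]
    refine ⟨hgΦ g hg α h1, ?_⟩
    rw [← hconj g hg α h1]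
    exact Γ.mul_mem (Γ.mul_mem hg h2) (Γ.inv_mem hg)
  have hself : ∀ α ∈ Φ, s α α = -α := by
    intro α hα
    rw [hs α hα, hcoroot α hα, two_smul]; abel
  have hsq : ∀ α ∈ Φ, s α * s α = 1 := by
    intro α hα
    ext x
    simp only [LinearEquiv.mul_apply, LinearEquiv.coe_one, id]
    rw [hs α hα x, map_sub, map_smul, hself α hα, hs α hα]
    simp
  have hneg : ∀ α ∈ Φ0, -α ∈ Φ0 := by
    intro α hα
    rw [← hself α (hΦ0Φ α hα)]
    exact hgΦ0 _ (hΦ0Γ α hα) α hα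
  have hsneg : ∀ α ∈ Φ0, s (-α) = s α := by
    intro α hα
    rw [← hself α (hΦ0Φ α hα), ← hconj _ (hΦ0Γ α hα) α (hΦ0Φ α hα)]
    simp
  have hP0 : ∀ α ∈ Φ0plus, α ∈ Φ0 := by
    intro α h; rw [hΦ0plus] at h; exact h.1
  have hPf : ∀ α ∈ Φ0plus, 0 < f α := by
    intro α h; rw [hΦ0plus] at h; exact h.2
  have hPmem : ∀ α ∈ Φ0, 0 < f α → α ∈ Φ0plus := by
    intro α h h'; rw [hΦ0plus]; exact ⟨h, h'⟩
  have hPneg : ∀ α ∈ Φ0, f α < 0 → -α ∈ Φ0plus := by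
    intro α h h'; exact hPmem _ (hneg α h) (by simpa using h')
  have hΦ0fin : Φ0.Finite := hfin.subset hΦ0Φ
  have hPfin : Φ0plus.Finite := hΦ0fin.subset hP0
  have hΓfin : (Γ : Set (V ≃ₗ[ℝ] V)).Finite := by
    have : Finite Φ := hfin
    let F : Γ → (Φ → Φ) := fun g x => ⟨g.1 x.1, hgΦ g.1 g.2 x.1 x.2⟩
    have hF : Function.Injective F := by
      intro g g' h
      apply Subtype.ext
      apply LinearEquiv.toLinearMap_injective
      apply LinearMap.ext_on hspan
      intro x hx
      have := congrArg Subtype.val (congrFun h ⟨x, hx⟩)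
      exact this
    exact Finite.of_injective F hF
  have hW0Γ : W0 ≤ Γ := by
    rw [hW0, Subgroup.closure_le]
    rintro _ ⟨α, hα, rfl⟩
    exact hΦ0Γ α hα
  have hsW0 : ∀ α ∈ Φ0, s α ∈ W0 := by
    intro α hα; rw [hW0]; exact Subgroup.subset_closure ⟨α, hα, rfl⟩
  have hnormal : ∀ g ∈ Γ, ∀ w ∈ W0, g * w * g⁻¹ ∈ W0 := by
    intro g hg w hw
    rw [hW0] at hw
    induction hw using Subgroup.closure_induction with
    | mem x hx =>
      obtain ⟨α, hα, rfl⟩ := hx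
      rw [hconj g hg α (hΦ0Φ α hα)]
      exact hsW0 _ (hgΦ0 g hg α hα)
    | one => simp
    | mul x y _ _ hx hy =>
      have := W0.mul_mem hx hy
      simpa [mul_assoc] using this
    | inv x _ hx =>
      have := W0.inv_mem hx
      simpa [mul_assoc] using this
  -- invariant form on the dual
  obtain ⟨B, hB⟩ : ∃ B : (V → ℝ) → (V → ℝ) → ℝ,
      ∀ φ ψ, B φ ψ = ∑ β ∈ hfin.toFinset, φ β * ψ β := ⟨_, fun _ _ => rfl⟩
  have hBinv : ∀ g ∈ Γ, ∀ φ ψ : V → ℝ, B (fun x => φ (g x)) (fun x => ψ (g x)) = B φ ψ := by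
    intro g hg φ ψ
    rw [hB, hB]
    refine Finset.sum_bij (fun x _ => g x) ?_ ?_ ?_ ?_
    · intro x hx; simpa using hgΦ g hg x (by simpa using hx)
    · intro x _ y _ h; exact g.injective h
    · intro y hy
      have hy' : y ∈ ⇑g '' Φ := by rw [hΓ g hg]; simpa using hy
      obtain ⟨x, hx, rfl⟩ := hy'
      exact ⟨x, by simpa using hx, rfl⟩
    · intro x _; rfl
  have hBpos : ∀ α ∈ Φ, 0 < B (coroot α) (coroot α) := by
    intro α hα
    rw [hB]
    refine Finset.sum_pos' (fun i _ => mul_self_nonneg _) ⟨α, by simpa using hα, ?_⟩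
    rw [hcoroot α hα]; norm_num
  have hBcor : ∀ α ∈ Φ0, ∀ ψ : Module.Dual ℝ V,
      2 * B (coroot α) ψ = ψ α * B (coroot α) (coroot α) := by
    intro α hα ψ
    have h1 := hBinv _ (hΦ0Γ α hα) (coroot α) ψ
    have h2 : B (fun x => coroot α (s α x)) (fun x => ψ (s α x))
        = - B (coroot α) ψ + ψ α * B (coroot α) (coroot α) := by
      simp only [hB]
      rw [Finset.mul_sum, ← Finset.sum_neg_distrib, ← Finset.sum_add_distrib]
      refine Finset.sum_congr rfl fun x _ => ?_
      rw [hs α (hΦ0Φ α hα)]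
      simp only [map_sub, map_smul, hcoroot α (hΦ0Φ α hα), smul_eq_mul]
      ring
    linarith
  have hcorsign : ∀ α ∈ Φ0, ∀ γ ∈ Φ0, 0 < coroot γ α → 0 < coroot α γ := by
    intro α hα γ hγ h
    have h1 := hBcor α hα (coroot γ)
    have h2 := hBcor γ hγ (coroot α)
    have h3 : B (coroot α) (coroot γ) = B (coroot γ) (coroot α) := by
      rw [hB, hB]; exact Finset.sum_congr rfl fun x _ => mul_comm _ _
    have p1 := hBpos α (hΦ0Φ α hα)
    have p2 := hBpos γ (hΦ0Φ γ hγ)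
    have h4 : 0 < coroot α γ * B (coroot γ) (coroot γ) := by
      rw [← h2, ← h3, h1]; positivity
    exact pos_of_mul_pos_left h4 p2.le
  -- transitivity
  have htrans : ∀ h : Module.Dual ℝ V, (∀ α ∈ Φ0, h α ≠ 0) →
      ∃ w ∈ W0, ∀ α ∈ Φ0plus, 0 < h (w α) := by
    intro h hne
    obtain ⟨w, hw, hmax⟩ := Set.exists_max_image (W0 : Set (V ≃ₗ[ℝ] V))
      (fun w => B (fun x => h (w x)) f) (hΓfin.subset hW0Γ) ⟨1, W0.one_mem⟩
    refine ⟨w, hw, fun α hα => ?_⟩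
    have hα0 := hP0 α hα
    have h1 := hmax _ (W0.mul_mem hw (hsW0 α hα0))
    have h2 : B (fun x => h ((w * s α) x)) f
        = B (fun x => h (w x)) f - h (w α) * B (coroot α) f := by
      simp only [hB]
      rw [Finset.mul_sum, ← Finset.sum_sub_distrib]
      refine Finset.sum_congr rfl fun x _ => ?_
      rw [LinearEquiv.mul_apply, hs α (hΦ0Φ α hα0)]
      simp only [map_sub, map_smul, smul_eq_mul]
      ring
    have h3 := hBcor α hα0 f
    have p1 := hBpos α (hΦ0Φ α hα0)
    have p2 := hPf α hα
    have h4 : 0 < B (coroot α) f := by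
      have : 0 < f α * B (coroot α) (coroot α) := mul_pos p2 p1
      linarith
    have h5 : 0 ≤ h (w α) * B (coroot α) f := by
      linarith
    have h6 : 0 ≤ h (w α) := nonneg_of_mul_nonneg_left h5 h4
    exact lt_of_le_of_ne h6 (Ne.symm (hne _ (hgΦ0 w (hW0Γ hw) α hα0)))
  -- simple roots
  obtain ⟨S, hS⟩ : ∃ S : Set V, S = {α ∈ Φ0plus | ∀ β ∈ Φ0plus, β ≠ α → 0 < f (s α β)} :=
    ⟨_, rfl⟩
  have hSP : ∀ α ∈ S, α ∈ Φ0plus := by intro α h; rw [hS] at h; exact h.1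
  have hSs : ∀ α ∈ S, ∀ β ∈ Φ0plus, β ≠ α → 0 < f (s α β) := by
    intro α h; rw [hS] at h; exact h.2
  have hcone : ∀ D : Set V, D ⊆ Φ0plus → ∀ z ∈ Submodule.span NNReal D,
      0 ≤ f z ∧ (f z = 0 → z = 0) := by
    intro D hD z hz
    induction hz using Submodule.span_induction with
    | mem x hx => exact ⟨(hPf x (hD hx)).le, fun h => absurd h (hPf x (hD hx)).ne'⟩
    | zero => simp
    | add x y _ _ hx hy =>
      rw [map_add]
      refine ⟨add_nonneg hx.1 hy.1, fun h => ?_⟩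
      have a1 := hx.1
      have a2 := hy.1
      rw [hx.2 (by linarith), hy.2 (by linarith), add_zero]
    | smul a x _ hx =>
      have e : a • x = (a : ℝ) • x := rfl
      rw [e, map_smul, smul_eq_mul]
      refine ⟨mul_nonneg a.2 hx.1, fun h => ?_⟩
      rcases mul_eq_zero.1 h with h | h
      · rw [h, zero_smul]
      · rw [hx.2 h, smul_zero]
  have hPS : ∀ β ∈ Φ0plus, β ∈ Submodule.span NNReal S := by
    obtain ⟨D, ⟨hDP, hDspan⟩, hDmin⟩ := Set.exists_min_image
      {D : Set V | D ⊆ Φ0plus ∧ Φ0plus ⊆ Submodule.span NNReal D} Set.ncard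
      (hPfin.finite_subsets.subset fun D hD => hD.1)
      ⟨Φ0plus, subset_rfl, Submodule.subset_span⟩
    have hDS : D ⊆ S := by
      intro α hαD
      have hαP := hDP hαD
      have hα0 := hP0 α hαP
      have hnot : α ∉ Submodule.span NNReal (D \ {α}) := by
        intro hmem
        have h1 : Submodule.span NNReal D ≤ Submodule.span NNReal (D \ {α}) := by
          rw [Submodule.span_le]
          intro x hx
          by_cases hxα : x = α
          · rw [hxα]; exact hmem
          · exact Submodule.subset_span ⟨hx, hxα⟩
        have h2 := hDmin (D \ {α}) ⟨Set.sdiff_subset.trans hDP, hDspan.trans h1⟩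
        have h3 := Set.ncard_sdiff_singleton_lt_of_mem hαD (hPfin.subset hDP)
        omega
      rw [hS]
      refine ⟨hαP, fun β hβ hne => ?_⟩
      by_contra hnp
      have hβ0 := hP0 β hβ
      have hsβ := hgΦ0 _ (hΦ0Γ α hα0) β hβ0
      have hlt : f (s α β) < 0 := lt_of_le_of_ne (not_lt.1 hnp) (hf _ hsβ)
      have hins : insert α (D \ {α}) = D := Set.insert_sdiff_self_of_mem hαD
      have m1 := hDspan hβ
      have m2 := hDspan (hPneg _ hsβ hlt)
      rw [← hins] at m1 m2
      obtain ⟨c, z, hz, e1⟩ := Submodule.mem_span_insert.1 m1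
      obtain ⟨d, z', hz', e2⟩ := Submodule.mem_span_insert.1 m2
      have ec : c • α = (c : ℝ) • α := rfl
      have ed : d • α = (d : ℝ) • α := rfl
      rw [ec] at e1
      rw [ed, hs α (hΦ0Φ α hα0)] at e2
      have hsum : (coroot α β - c - d) • α = z + z' := by
        have a1 : z = β - (c : ℝ) • α := by rw [e1]; abel
        have a2 : z' = -(β - coroot α β • α) - (d : ℝ) • α := by rw [e2]; abel
        rw [a1, a2]
        module
      have hzc := hcone (D \ {α}) (Set.sdiff_subset.trans hDP) z hz
      have hzc' := hcone (D \ {α}) (Set.sdiff_subset.trans hDP) z' hz'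
      rcases lt_or_ge 0 (coroot α β - c - d) with hp | hp
      · apply hnot
        have h5 : α = (⟨(coroot α β - c - d)⁻¹, (inv_pos.2 hp).le⟩ : NNReal) • (z + z') := by
          have : (⟨(coroot α β - c - d)⁻¹, (inv_pos.2 hp).le⟩ : NNReal) • (z + z')
            = (coroot α β - c - d)⁻¹ • (z + z') := rfl
          rw [this, ← hsum, smul_smul, inv_mul_cancel₀ hp.ne', one_smul]
        have h6 : (⟨(coroot α β - c - d)⁻¹, (inv_pos.2 hp).le⟩ : NNReal) • (z + z')
            ∈ Submodule.span NNReal (D \ {α}) :=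
          Submodule.smul_mem _ _ (Submodule.add_mem _ hz hz')
        rwa [← h5] at h6
      · have h5 := congrArg f hsum
        rw [map_smul, map_add, smul_eq_mul] at h5
        have h6 : (coroot α β - c - d) * f α ≤ 0 :=
          mul_nonpos_of_nonpos_of_nonneg hp (hPf α hαP).le
        have hz0 : z = 0 := hzc.2 (by linarith [hzc.1, hzc'.1])
        rw [hz0, add_zero] at e1
        have h7 := hred α (hΦ0Φ α hα0) c (by rw [← e1]; exact hΦ0Φ β hβ0)
        rcases h7 with h7 | h7
        · apply hne; rw [e1, h7, one_smul]
        · have := c.2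
          have h8 : (0 : ℝ) ≤ c := this
          linarith
    intro β hβ
    exact Submodule.span_mono hDS (hDspan hβ)
  have hS0 : ∀ α ∈ S, α ∈ Φ0 := fun α h => hP0 α (hSP α h)
  -- W0 is generated by simple reflections
  obtain ⟨W', hW'⟩ : ∃ W' : Subgroup (V ≃ₗ[ℝ] V), W' = Subgroup.closure (s '' S) := ⟨_, rfl⟩
  have hW'W0 : W' ≤ W0 := by
    rw [hW', hW0]; exact Subgroup.closure_mono (Set.image_mono hS0)
  have hsW' : ∀ α ∈ S, s α ∈ W' := by
    intro α h; rw [hW']; exact Subgroup.subset_closure ⟨α, h, rfl⟩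
  have hrefl : ∀ β ∈ Φ0plus, s β ∈ W' := by
    intro β hβ
    obtain ⟨γ, ⟨hγP, w, hw, hwγ⟩, hmin⟩ := Set.exists_min_image
      {γ : V | γ ∈ Φ0plus ∧ ∃ w ∈ W', w β = γ} f
      (hPfin.subset fun γ h => h.1) ⟨β, hβ, 1, W'.one_mem, rfl⟩
    have hγS : γ ∈ S := by
      by_contra hγS
      have hγ0 := hP0 γ hγP
      have hle : ∀ α ∈ S, coroot γ α ≤ 0 := by
        intro α hα
        by_contra hpos
        have hα0 := hS0 α hα
        have h1 := hcorsign α hα0 γ hγ0 (not_le.1 hpos)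
        have h2 := hSs α hα γ hγP (fun e => hγS (e ▸ hα))
        have h3 := hmin (s α γ) ⟨hPmem _ (hgΦ0 _ (hΦ0Γ α hα0) γ hγ0) h2,
          s α * w, W'.mul_mem (hsW' α hα) hw, by rw [LinearEquiv.mul_apply, hwγ]⟩
        rw [hs α (hΦ0Φ α hα0), map_sub, map_smul, smul_eq_mul] at h3
        have := mul_pos h1 (hPf α (hSP α hα))
        linarith
      have hle' : ∀ z ∈ Submodule.span NNReal S, coroot γ z ≤ 0 := by
        intro z hz
        induction hz using Submodule.span_induction with
        | mem x hx => exact hle x hx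
        | zero => simp
        | add x y _ _ hx hy => rw [map_add]; linarith
        | smul a x _ hx =>
          have e : a • x = (a : ℝ) • x := rfl
          rw [e, map_smul, smul_eq_mul]
          exact mul_nonpos_of_nonneg_of_nonpos a.2 hx
      have := hle' γ (hPS γ hγP)
      rw [hcoroot γ (hΦ0Φ γ hγ0)] at this
      linarith
    have h1 := hconj w (hW0Γ (hW'W0 hw)) β (hΦ0Φ β (hP0 β hβ))
    rw [hwγ] at h1
    have h2 : s β = w⁻¹ * s γ * w := by rw [← h1]; group
    rw [h2]
    exact W'.mul_mem (W'.mul_mem (W'.inv_mem hw) (hsW' γ hγS)) hw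
  have hW0W' : W0 ≤ W' := by
    rw [hW0, Subgroup.closure_le]
    rintro _ ⟨α, hα, rfl⟩
    rcases lt_or_gt_of_ne (hf α hα) with h | h
    · rw [← hsneg α hα]; exact hrefl _ (hPneg α hα h)
    · exact hrefl _ (hPmem α hα h)
  -- words
  have hword : ∀ w ∈ W', ∃ l : List V, (∀ a ∈ l, a ∈ S) ∧ (l.map s).prod = w := by
    intro w hw
    rw [hW'] at hw
    induction hw using Subgroup.closure_induction with
    | mem x hx =>
      obtain ⟨α, hα, rfl⟩ := hx
      exact ⟨[α], by simpa using hα, by simp⟩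
    | one => exact ⟨[], by simp, by simp⟩
    | mul x y _ _ hx hy =>
      obtain ⟨l, hl, rfl⟩ := hx
      obtain ⟨l', hl', rfl⟩ := hy
      refine ⟨l ++ l', ?_, by simp⟩
      intro a ha
      rcases List.mem_append.1 ha with h | h
      · exact hl a h
      · exact hl' a h
    | inv x _ hx =>
      obtain ⟨l, hl, rfl⟩ := hx
      refine ⟨l.reverse, fun a ha => hl a (List.mem_reverse.1 ha), ?_⟩
      clear * - hl hsq hS0 hΦ0Φ
      induction l with
      | nil => simp
      | cons a t ih =>
        have h1 := ih (fun b hb => hl b (List.mem_cons_of_mem _ hb))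
        have h2 : (s a)⁻¹ = s a :=
          inv_eq_of_mul_eq_one_left (hsq a (hΦ0Φ _ (hS0 _ (hl a List.mem_cons_self))))
        simp only [List.reverse_cons, List.map_append, List.prod_append, List.map_cons,
          List.prod_cons, List.map_nil, List.prod_nil, mul_one, mul_inv_rev]
        rw [h1, h2]
  have hlΓ : ∀ l : List V, (∀ a ∈ l, a ∈ S) → (l.map s).prod ∈ Γ := by
    intro l hl
    apply Subgroup.list_prod_mem
    intro x hx
    obtain ⟨a, ha, rfl⟩ := List.mem_map.1 hx
    exact hΦ0Γ a (hS0 a (hl a ha))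
  have hexch : ∀ l : List V, (∀ a ∈ l, a ∈ S) → ∀ α ∈ S, f ((l.map s).prod α) < 0 →
      ∃ l' : List V, (∀ a ∈ l', a ∈ S) ∧ l'.length + 1 = l.length ∧
        (l'.map s).prod = (l.map s).prod * s α := by
    intro l
    induction l with
    | nil =>
      intro _ α hα h
      have := hPf α (hSP α hα)
      simp at h
      linarith
    | cons a t ih =>
      intro hl α hα h
      have ha : a ∈ S := hl a List.mem_cons_self
      have ht : ∀ b ∈ t, b ∈ S := fun b hb => hl b (List.mem_cons_of_mem _ hb)
      have hα0 := hS0 α hα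
      have htα := hgΦ0 _ (hlΓ t ht) α hα0
      rcases lt_or_gt_of_ne (hf _ htα) with h1 | h1
      · obtain ⟨t', ht', hlen, hprod⟩ := ih ht α hα h1
        refine ⟨a :: t', ?_, by simp [hlen], by simp [hprod, mul_assoc]⟩
        intro b hb
        rcases List.mem_cons.1 hb with rfl | hb
        · exact ha
        · exact ht' b hb
      · refine ⟨t, ht, by simp, ?_⟩
        have h2 : (t.map s).prod α = a := by
          by_contra hne
          have := hSs a ha _ (hPmem _ htα h1) hne
          rw [List.map_cons, List.prod_cons, LinearEquiv.mul_apply] at h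
          linarith
        have h3 := hconj _ (hlΓ t ht) α (hΦ0Φ α hα0)
        rw [h2, mul_inv_eq_iff_eq_mul] at h3
        rw [List.map_cons, List.prod_cons, mul_assoc, h3, ← mul_assoc,
          hsq a (hΦ0Φ a (hS0 a ha)), one_mul]
  have hfree : ∀ n : ℕ, ∀ l : List V, l.length = n → (∀ a ∈ l, a ∈ S) →
      (∀ α ∈ Φ0plus, 0 < f ((l.map s).prod α)) → (l.map s).prod = 1 := by
    intro n
    induction n using Nat.strong_induction_on with
    | _ n ih =>
      intro l hlen hl hpos
      rcases List.eq_nil_or_concat l with rfl | ⟨l0, α, rfl⟩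
      · simp
      · have hα : α ∈ S := hl α (by simp)
        have hl0 : ∀ a ∈ l0, a ∈ S := fun a ha => hl a (by simp [ha])
        have hprod0 : ((l0.concat α).map s).prod = (l0.map s).prod * s α := by simp
        have h1 := hpos α (hSP α hα)
        rw [hprod0, LinearEquiv.mul_apply, hself α (hΦ0Φ α (hS0 α hα)), map_neg, map_neg] at h1
        obtain ⟨l', hl', hlen', hprod'⟩ := hexch l0 hl0 α hα (by linarith)
        rw [← hprod0] at hprod'
        rw [← hprod'] at hpos ⊢
        simp at hlen
        exact ih l'.length (by omega) l' rfl hl' hpos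
  have htriv : ∀ x : V ≃ₗ[ℝ] V, x ∈ W0 → x ∈ Γ1 → x = 1 := by
    intro x hx hx1
    obtain ⟨l, hl, rfl⟩ := hword x (hW0W' hx)
    rw [hΓ1] at hx1
    refine hfree _ l rfl hl fun α hα => hPf _ ?_
    rw [← hx1.2]
    exact ⟨α, hα, rfl⟩
  have hone : (1 : V ≃ₗ[ℝ] V) ∈ Γ1 := by
    rw [hΓ1]; exact ⟨Γ.one_mem, by simp⟩
  have hmul : ∀ a ∈ Γ1, ∀ b ∈ Γ1, a * b ∈ Γ1 := by
    rw [hΓ1]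
    rintro a ⟨ha, ha'⟩ b ⟨hb, hb'⟩
    refine ⟨Γ.mul_mem ha hb, ?_⟩
    have : ⇑(a * b) = ⇑a ∘ ⇑b := rfl
    rw [this, Set.image_comp, hb', ha']
  have hinv : ∀ a ∈ Γ1, a⁻¹ ∈ Γ1 := by
    rw [hΓ1]
    rintro a ⟨ha, ha'⟩
    refine ⟨Γ.inv_mem ha, ?_⟩
    nth_rw 1 [← ha']
    rw [← Set.image_comp]
    have : ⇑(a⁻¹) ∘ ⇑a = id := by
      funext x; exact a.symm_apply_apply x
    rw [this, Set.image_id]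
  refine ⟨⟨hone, hmul, hinv⟩, ⟨hW0Γ, hnormal⟩, htriv, ?_⟩
  intro g hg
  obtain ⟨w, hw, hwpos⟩ := htrans (f.comp (g⁻¹ : V ≃ₗ[ℝ] V).toLinearMap)
    (fun α hα => hf _ (hgΦ0 _ (Γ.inv_mem hg) α hα))
  have hv' : g⁻¹ * w ∈ Γ1 := by
    rw [hΓ1]
    have hgw : g⁻¹ * w ∈ Γ := Γ.mul_mem (Γ.inv_mem hg) (hW0Γ hw)
    refine ⟨hgw, ?_⟩
    apply Set.eq_of_subset_of_ncard_le _ _ hPfin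
    · rintro _ ⟨α, hα, rfl⟩
      exact hPmem _ (hgΦ0 _ hgw α (hP0 α hα)) (hwpos α hα)
    · rw [Set.ncard_image_of_injective _ (g⁻¹ * w).injective]
  have hv : w⁻¹ * g ∈ Γ1 := by
    have := hinv _ hv'
    simpa using this
  refine ⟨(w, w⁻¹ * g), ⟨hw, hv, by simp⟩, ?_⟩
  rintro ⟨u, v⟩ ⟨hu, hv1, he⟩
  simp only at hu hv1 he
  have h1 : w⁻¹ * u = 1 := by
    apply htriv _ (W0.mul_mem (W0.inv_mem hw) hu)
    have h2 : w⁻¹ * u = (w⁻¹ * g) * v⁻¹ := by rw [he]; group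
    rw [h2]
    exact hmul _ hv _ (hinv _ hv1)
  have h2 : u = w := (inv_mul_eq_one.1 h1).symm
  rw [Prod.mk.injEq]
  refine ⟨h2, ?_⟩
  rw [he, h2]; group
end

section
/- For every vector v ∈ V, the stabilizer {w ∈ W : w(v) = v} of v in the Weyl group W is equal to the subgroup of W generated by the reflections s_α for those roots α ∈ Φ satisfying α^∨(v) = 0 (equivalently, those reflections s_α fixing v). -/
theorem coroot_line_aux {V : Type*} [AddCommGroup V] [Module ℝ V] (Φ : Set V) (hfin : Φ.Finite)
    (u : V → V) (hu : ∀ x ∈ Φ, u x ∈ Φ) (f : Module.Dual ℝ V) (d a : V) (ha : a ∈ Φ)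
    (hf : f d = 0) (hfa : f a = 2) (hux : ∀ x, u x = x + f x • d) : d = 0 := by
  by_contra hd
  have h : ∀ n : ℕ, a + ((2 * n : ℝ)) • d ∈ Φ := by
    intro n
    induction n with
    | zero => simpa using ha
    | succ n ih =>
      have := hu _ ih
      rw [hux] at this
      simp only [map_add, map_smul, hf, hfa, smul_zero, add_zero] at this
      convert this using 1
      push_cast
      module
  refine Set.infinite_of_injective_forall_mem (f := fun n : ℕ => a + ((2 * n : ℝ)) • d) ?_ h hfin
  intro m n hmn
  simp only [add_right_inj] at hmn
  have := smul_left_injective ℝ hd hmn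
  have h2 : (m : ℝ) = n := by linarith
  exact_mod_cast h2

theorem exists_generic_aux {V : Type*} [AddCommGroup V] [Module ℝ V]
    (Φ : Set V) (hfin : Φ.Finite) (coroot : V → Module.Dual ℝ V)
    (hne : ∀ α ∈ Φ, coroot α ≠ 0) (v : V) :
    ∃ p : V, ∀ α ∈ Φ, coroot α p ≠ 0 ∧ (0 < coroot α p → 0 ≤ coroot α v)
      ∧ (coroot α p < 0 → coroot α v ≤ 0) := by
  obtain ⟨q, hq⟩ : ∃ q : V, ∀ α ∈ Φ, coroot α q ≠ 0 := by
    have := hfin.to_subtype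
    obtain ⟨q, hq⟩ := Module.Dual.exists_forall_ne_zero_of_forall_exists
      (fun α : Φ => coroot α) (fun α => by
        by_contra! h
        exact hne α α.2 (LinearMap.ext h))
    exact ⟨q, fun α hα => hq ⟨α, hα⟩⟩
  have key : ∀ᶠ ε : ℝ in nhdsWithin 0 (Set.Ioi 0), ∀ α ∈ Φ,
      coroot α (v + ε • q) ≠ 0 ∧ (0 < coroot α (v + ε • q) → 0 ≤ coroot α v)
      ∧ (coroot α (v + ε • q) < 0 → coroot α v ≤ 0) := by
    rw [Filter.eventually_all_finite hfin]
    intro α hα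
    have hc : Filter.Tendsto (fun ε : ℝ => coroot α (v + ε • q)) (nhdsWithin 0 (Set.Ioi 0))
        (nhds (coroot α v)) := by
      have : Continuous (fun ε : ℝ => coroot α v + ε * coroot α q) := by fun_prop
      have h := (this.tendsto 0).mono_left (nhdsWithin_le_nhds (s := Set.Ioi 0))
      simpa using h
    rcases lt_trichotomy (coroot α v) 0 with h | h | h
    · filter_upwards [hc.eventually_lt_const h] with ε hε
      exact ⟨hε.ne, fun h' => absurd h' (by linarith), fun _ => h.le⟩
    · filter_upwards [self_mem_nhdsWithin] with ε hε
      refine ⟨?_, fun _ => h.ge, fun _ => h.le⟩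
      simp only [map_add, map_smul, h, zero_add, smul_eq_mul]
      exact mul_ne_zero (ne_of_gt hε) (hq α hα)
    · filter_upwards [hc.eventually_const_lt h] with ε hε
      exact ⟨hε.ne', fun _ => h.le, fun h' => absurd h' (by linarith)⟩
  obtain ⟨ε, hε⟩ := key.exists
  exact ⟨_, hε⟩

/- STATEMENT 7: For every vector `v ∈ V`, the stabilizer `{w ∈ W | w v = v}` of `v` in
the Weyl group `W` is equal to the subgroup of `W` generated by the reflections `s_α`
for those roots `α ∈ Φ` satisfying `α^∨(v) = 0` (equivalently, those reflections `s_α`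
fixing `v`). -/
theorem stabilizer_eq_closure_fixing_reflections
    (V : Type*) [AddCommGroup V] [Module ℝ V] [FiniteDimensional ℝ V]
    (Φ : Set V) (hfin : Φ.Finite) (h0 : (0 : V) ∉ Φ)
    (hspan : Submodule.span ℝ Φ = ⊤)
    (coroot : V → Module.Dual ℝ V)
    (hcoroot : ∀ α ∈ Φ, coroot α α = 2)
    (s : V → (V ≃ₗ[ℝ] V))
    (hs : ∀ α ∈ Φ, ∀ x : V, s α x = x - coroot α x • α)
    (hmaps : ∀ α ∈ Φ, ⇑(s α) '' Φ = Φ)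
    (hred : ∀ α ∈ Φ, ∀ t : ℝ, t • α ∈ Φ → t = 1 ∨ t = -1)
    (W : Subgroup (V ≃ₗ[ℝ] V)) (hW : W = Subgroup.closure (s '' Φ)) :
    ∀ v : V, {w : V ≃ₗ[ℝ] V | w ∈ W ∧ w v = v} =
      (Subgroup.closure (s '' {α ∈ Φ | coroot α v = 0}) : Subgroup (V ≃ₗ[ℝ] V)) := by
  classical
  intro v
  have hsm : ∀ α ∈ Φ, ∀ x ∈ Φ, s α x ∈ Φ := fun α hα x hx => by
    rw [← hmaps α hα]; exact ⟨x, hx, rfl⟩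
  have hss : ∀ α ∈ Φ, ∀ x, s α (s α x) = x := fun α hα x => by
    rw [hs α hα, hs α hα]
    simp only [map_sub, map_smul, hcoroot α hα, smul_eq_mul]
    module
  have hs2 : ∀ α ∈ Φ, s α * s α = 1 := fun α hα => by
    ext x; exact hss α hα x
  have hself : ∀ α ∈ Φ, s α α = -α := fun α hα => by
    rw [hs α hα, hcoroot α hα]; module
  have hnegm : ∀ α ∈ Φ, -α ∈ Φ := fun α hα => hself α hα ▸ hsm α hα α hα
  -- uniqueness of coroots
  have huniq : ∀ α ∈ Φ, ∀ f : Module.Dual ℝ V, f α = 2 →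
      (∀ x ∈ Φ, x - f x • α ∈ Φ) → f = coroot α := by
    intro α hα f hf hfm
    have hα0 : α ≠ 0 := fun h => h0 (h ▸ hα)
    refine Module.Dual.eq_of_preReflection_mapsTo hfin hspan hf ?_ (hcoroot α hα) ?_
    · intro x hx; simpa [Module.preReflection_apply] using hfm x hx
    · intro x hx
      have := hsm α hα x hx
      rw [hs α hα] at this
      simpa [Module.preReflection_apply] using this
  have hWm : ∀ α ∈ Φ, s α ∈ W := fun α hα => hW ▸ Subgroup.subset_closure ⟨α, hα, rfl⟩
  have hWΦ : ∀ g ∈ W, ∀ x ∈ Φ, g x ∈ Φ := by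
    intro g hg
    rw [hW] at hg
    induction hg using Subgroup.closure_induction'' with
    | one => intro x hx; exact hx
    | mem g hg => obtain ⟨α, hα, rfl⟩ := hg; exact hsm α hα
    | inv_mem g hg =>
      obtain ⟨α, hα, rfl⟩ := hg
      rw [inv_eq_of_mul_eq_one_left (hs2 α hα)]
      exact hsm α hα
    | mul a b _ _ ha hb => intro x hx; exact ha _ (hb _ hx)
  have hinv : ∀ g : V ≃ₗ[ℝ] V, ∀ x, g (g⁻¹ x) = x := fun g x => g.apply_symm_apply x
  have hinv' : ∀ g : V ≃ₗ[ℝ] V, ∀ x, g⁻¹ (g x) = x := fun g x => g.symm_apply_apply x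
  have hequiv : ∀ g ∈ W, ∀ α ∈ Φ, ∀ x, coroot (g α) x = coroot α (g⁻¹ x) := by
    intro g hg α hα x
    have := huniq (g α) (hWΦ g hg α hα) ((coroot α).comp (g⁻¹ : V ≃ₗ[ℝ] V).toLinearMap)
      (by simp [hinv', hcoroot α hα]) (by
        intro x hx
        have h1 := hWΦ g hg _ (hsm α hα _ (hWΦ g⁻¹ (inv_mem hg) x hx))
        rw [hs α hα, map_sub, map_smul, hinv] at h1
        exact h1)
    rw [← this]; rfl
  have hconj : ∀ g ∈ W, ∀ α ∈ Φ, s (g α) = g * s α * g⁻¹ := by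
    intro g hg α hα
    ext x
    change s (g α) x = g (s α (g⁻¹ x))
    rw [hs _ (hWΦ g hg α hα), hs α hα, map_sub, map_smul, hinv, hequiv g hg α hα]
  have hequivs : ∀ α ∈ Φ, ∀ β ∈ Φ, ∀ x, coroot (s α β) x = coroot β (s α x) := by
    intro α hα β hβ x
    rw [hequiv _ (hWm α hα) β hβ, inv_eq_of_mul_eq_one_left (hs2 α hα)]
  have hcneg : ∀ α ∈ Φ, ∀ x, coroot (-α) x = - coroot α x := by
    intro α hα x
    rw [← hself α hα, hequivs α hα α hα, hs α hα, map_sub, map_smul, hcoroot α hα, smul_eq_mul]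
    ring
  have hsneg : ∀ α ∈ Φ, s (-α) = s α := by
    intro α hα
    ext x
    rw [hs _ (hnegm α hα), hs α hα, hcneg α hα]; module
  -- proportional coroots
  have hprop : ∀ α ∈ Φ, ∀ β ∈ Φ, ∀ c : ℝ, 0 ≤ c → coroot β = c • coroot α → β = α := by
    intro α hα β hβ c hc h
    have hβα : coroot β α = 2 * c := by rw [h]; simp [hcoroot α hα, mul_comm]
    have hαβ : c * coroot α β = 2 := by
      have := hcoroot β hβ
      rw [h] at this; simpa using this
    have hd := coroot_line_aux Φ hfin (fun x => s β (s α x))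
      (fun x hx => hsm β hβ _ (hsm α hα x hx)) (coroot α) (c • β - α) α hα
      (by simp [hαβ, hcoroot α hα]) (hcoroot α hα) (by
        intro x
        simp only [hs β hβ, hs α hα, map_sub, map_smul, hβα]
        rw [h]
        simp only [LinearMap.smul_apply, smul_eq_mul]
        module)
    have hcα : c • β = α := sub_eq_zero.mp hd
    rcases hred β hβ c (hcα ▸ hα) with h1 | h1
    · rw [h1, one_smul] at hcα; exact hcα
    · linarith
  obtain ⟨p, hp⟩ := exists_generic_aux Φ hfin coroot (fun α hα h => by
    have := hcoroot α hα; rw [h] at this; simp at this) v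
  -- positive roots
  let P : Finset V := hfin.toFinset.filter (fun α => 0 < coroot α p)
  have memP : ∀ α, α ∈ P ↔ α ∈ Φ ∧ 0 < coroot α p := by intro α; simp [P]
  have hnotP : ∀ α ∈ Φ, α ∉ P → coroot α p < 0 := by
    intro α hα h
    rw [memP] at h
    have := (hp α hα).1
    push Not at h
    exact lt_of_le_of_ne (h hα) this
  have hnegP : ∀ α ∈ Φ, α ∉ P → -α ∈ P := by
    intro α hα h
    rw [memP]
    refine ⟨hnegm α hα, ?_⟩
    rw [hcneg α hα]
    linarith [hnotP α hα h]
  have hnegP' : ∀ α ∈ P, -α ∉ P := by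
    intro α h h'
    rw [memP] at h h'
    rw [hcneg α h.1] at h'
    linarith [h.2, h'.2]
  let gen : Finset V → Prop := fun T => T ⊆ P ∧ ∀ β ∈ P, ∃ c : V → ℝ, (∀ γ, 0 ≤ c γ) ∧
    coroot β = ∑ γ ∈ T, c γ • coroot γ
  have hgenP : gen P := by
    refine ⟨subset_rfl, fun β hβ => ⟨fun γ => if γ = β then 1 else 0, ?_, ?_⟩⟩
    · intro γ; dsimp only; split_ifs <;> norm_num
    · simp [Finset.sum_ite_eq', hβ]
  obtain ⟨Δ, hΔ, hmin⟩ : ∃ Δ, gen Δ ∧ ∀ T, gen T → Δ.card ≤ T.card := by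
    have hex : ∃ n, ∃ T, gen T ∧ T.card = n := ⟨_, P, hgenP, rfl⟩
    obtain ⟨Δ, h1, h2⟩ := Nat.find_spec hex
    exact ⟨Δ, h1, fun T hT => h2 ▸ Nat.find_min' hex ⟨T, hT, rfl⟩⟩
  have hΔP : ∀ δ ∈ Δ, δ ∈ P := fun δ h => hΔ.1 h
  have hΔΦ : ∀ δ ∈ Δ, δ ∈ Φ := fun δ h => ((memP δ).1 (hΔP δ h)).1
  have hPΦ : ∀ δ ∈ P, δ ∈ Φ := fun δ h => ((memP δ).1 h).1
  have hPp : ∀ δ ∈ P, 0 < coroot δ p := fun δ h => ((memP δ).1 h).2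
  have hindep : ∀ δ ∈ Δ, ∀ c : V → ℝ, (∀ γ, 0 ≤ c γ) →
      coroot δ ≠ ∑ γ ∈ Δ.erase δ, c γ • coroot γ := by
    intro δ hδ c hc h
    have hg : gen (Δ.erase δ) := by
      refine ⟨fun x hx => hΔ.1 (Finset.mem_of_mem_erase hx), fun β hβ => ?_⟩
      obtain ⟨b, hb, hb'⟩ := hΔ.2 β hβ
      refine ⟨fun γ => b γ + b δ * c γ, fun γ => add_nonneg (hb γ) (mul_nonneg (hb δ) (hc γ)), ?_⟩
      rw [hb', ← Finset.add_sum_erase _ _ hδ]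
      simp only [add_smul, Finset.sum_add_distrib, mul_smul]
      rw [← Finset.smul_sum, ← h, add_comm]
    have := hmin _ hg
    have := Finset.card_erase_lt_of_mem hδ
    omega
  have hsimple : ∀ δ ∈ Δ, ∀ β ∈ P, β ≠ δ → s δ β ∈ P := by
    intro δ hδ β hβ hne
    by_contra hn
    have hδΦ := hΔΦ δ hδ
    have hβΦ := hPΦ β hβ
    have hη := hnegP _ (hsm δ hδΦ β hβΦ) hn
    obtain ⟨c, hc, hc'⟩ := hΔ.2 β hβ
    obtain ⟨d, hd, hd'⟩ := hΔ.2 _ hη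
    have hsum : coroot β + coroot (-(s δ β)) = coroot β δ • coroot δ := by
      ext x
      simp only [LinearMap.add_apply, LinearMap.smul_apply, smul_eq_mul]
      rw [hcneg _ (hsm δ hδΦ β hβΦ), hequivs δ hδΦ β hβΦ, hs δ hδΦ, map_sub, map_smul, smul_eq_mul]
      ring
    have hsum2 : ∑ γ ∈ Δ.erase δ, (c γ + d γ) • coroot γ
        = (coroot β δ - (c δ + d δ)) • coroot δ := by
      ext x
      have h1 := congrArg (fun f : Module.Dual ℝ V => f x) hsum
      rw [hd'] at h1
      nth_rewrite 1 [hc'] at h1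
      rw [← Finset.add_sum_erase _ _ hδ, ← Finset.add_sum_erase _ _ hδ] at h1
      simp only [LinearMap.add_apply, LinearMap.sum_apply, LinearMap.smul_apply, smul_eq_mul]
        at h1 ⊢
      simp only [add_mul, Finset.sum_add_distrib]
      linarith
    set t := coroot β δ - (c δ + d δ) with ht
    by_cases hz : ∀ γ ∈ Δ.erase δ, c γ = 0
    · apply hne
      refine hprop δ hδΦ β hβΦ (c δ) (hc δ) ?_
      rw [hc', ← Finset.add_sum_erase _ _ hδ, Finset.sum_eq_zero, add_zero]
      intro γ hγ; rw [hz γ hγ, zero_smul]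
    · push Not at hz
      obtain ⟨γ, hγ, hγ0⟩ := hz
      have hpos : 0 < ∑ γ ∈ Δ.erase δ, (c γ + d γ) * coroot γ p := by
        refine Finset.sum_pos' (fun x hx => mul_nonneg (add_nonneg (hc x) (hd x))
          (hPp x (hΔP x (Finset.mem_of_mem_erase hx))).le) ⟨γ, hγ, ?_⟩
        exact mul_pos (add_pos_of_pos_of_nonneg (lt_of_le_of_ne (hc γ) hγ0.symm) (hd γ))
          (hPp γ (hΔP γ (Finset.mem_of_mem_erase hγ)))
      have hev := congrArg (fun f : Module.Dual ℝ V => f p) hsum2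
      simp only [LinearMap.sum_apply, LinearMap.smul_apply, smul_eq_mul] at hev
      rw [hev] at hpos
      have htpos : 0 < t := pos_of_mul_pos_left hpos (hPp δ (hΔP δ hδ)).le
      refine hindep δ hδ (fun γ => t⁻¹ * (c γ + d γ))
        (fun γ => mul_nonneg (inv_nonneg.2 htpos.le) (add_nonneg (hc γ) (hd γ))) ?_
      simp only [mul_smul]
      rw [← Finset.smul_sum, hsum2, smul_smul, inv_mul_cancel₀ htpos.ne', one_smul]
  have hB : ∀ g ∈ W, ∀ α ∈ P, g α ∉ P → ∃ δ ∈ Δ, g δ ∉ P := by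
    intro g hg α hα hgα
    by_contra! hcon
    obtain ⟨c, hc, hc'⟩ := hΔ.2 α hα
    have h1 := hnotP _ (hWΦ g hg α (hPΦ α hα)) hgα
    rw [hequiv g hg α (hPΦ α hα), hc'] at h1
    simp only [LinearMap.sum_apply, LinearMap.smul_apply, smul_eq_mul] at h1
    refine absurd h1 (not_lt.2 (Finset.sum_nonneg fun δ hδ => mul_nonneg (hc δ) ?_))
    rw [← hequiv g hg δ (hΔΦ δ hδ)]
    exact (hPp _ (hcon δ hδ)).le
  let f : Module.Dual ℝ V := ∑ β ∈ P, coroot β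
  have hf : ∀ δ ∈ Δ, f δ = 2 := by
    intro δ hδ
    have hδΦ := hΔΦ δ hδ
    have hmem : ∀ β ∈ P.erase δ, s δ β ∈ P.erase δ := by
      intro β hβ
      rw [Finset.mem_erase] at hβ ⊢
      refine ⟨fun h => ?_, hsimple δ hδ β hβ.2 hβ.1⟩
      have h2 : β = -δ := by rw [← hss δ hδΦ β, h, hself δ hδΦ]
      exact hnegP' δ (hΔP δ hδ) (h2 ▸ hβ.2)
    have hS : ∑ β ∈ P.erase δ, coroot β δ = ∑ β ∈ P.erase δ, - coroot β δ := by
      refine Finset.sum_nbij' (fun β => s δ β) (fun β => s δ β) hmem hmem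
        (fun β _ => hss δ hδΦ β) (fun β _ => hss δ hδΦ β) ?_
      intro β hβ
      rw [hequivs δ hδΦ β (hPΦ β (Finset.mem_of_mem_erase hβ)), hself δ hδΦ, map_neg, neg_neg]
    rw [Finset.sum_neg_distrib] at hS
    simp only [f, LinearMap.sum_apply]
    rw [← Finset.add_sum_erase _ _ (hΔP δ hδ), hcoroot δ hδΦ]
    linarith
  -- generation by simple reflections
  let G : Subgroup (V ≃ₗ[ℝ] V) := Subgroup.closure (s '' (Δ : Set V))
  have hGm : ∀ δ ∈ Δ, s δ ∈ G := fun δ hδ => Subgroup.subset_closure ⟨δ, hδ, rfl⟩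
  have hA : ∀ n : ℕ, ∀ α ∈ P, (P.filter (fun β => f β < f α)).card = n → s α ∈ G := by
    intro n
    induction n using Nat.strong_induction_on with
    | _ n ih =>
    intro α hα hn
    by_cases hαΔ : α ∈ Δ
    · exact hGm α hαΔ
    have hαΦ := hPΦ α hα
    obtain ⟨δ, hδ, hδn⟩ := hB (s α) (hWm α hαΦ) α hα (by
      rw [hself α hαΦ]; exact hnegP' α hα)
    have hδΦ := hΔΦ δ hδ
    have hpos : 0 < coroot δ α := by
      have h1 := hnotP _ (hsm α hαΦ δ hδΦ) hδn
      rw [hequivs α hαΦ δ hδΦ, hs α hαΦ, map_sub, map_smul, smul_eq_mul] at h1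
      have h2 := hPp δ (hΔP δ hδ)
      have h3 := hPp α hα
      exact pos_of_mul_pos_right (a := coroot α p) (by linarith) h3.le
    have hβ : s δ α ∈ P := hsimple δ hδ α hα (fun h => hαΔ (h ▸ hδ))
    have hlt : f (s δ α) < f α := by
      rw [hs δ hδΦ, map_sub, map_smul, hf δ hδ, smul_eq_mul]; linarith
    have hcard : (P.filter (fun β => f β < f (s δ α))).card < n := by
      rw [← hn]
      refine Finset.card_lt_card (Finset.ssubset_iff_subset_ne.2 ⟨?_, fun h => ?_⟩)
      · intro x hx
        rw [Finset.mem_filter] at hx ⊢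
        exact ⟨hx.1, hx.2.trans hlt⟩
      · have : s δ α ∈ P.filter (fun β => f β < f α) := Finset.mem_filter.2 ⟨hβ, hlt⟩
        rw [← h, Finset.mem_filter] at this
        exact lt_irrefl _ this.2
    have h4 := ih _ hcard _ hβ rfl
    have h5 : s α = s δ * s (s δ α) * (s δ)⁻¹ := by
      rw [← hconj _ (hWm δ hδΦ) _ (hPΦ _ hβ), hss δ hδΦ]
    rw [h5]
    exact mul_mem (mul_mem (hGm δ hδ) h4) (inv_mem (hGm δ hδ))
  have hWG : W ≤ G := by
    rw [hW, Subgroup.closure_le]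
    rintro _ ⟨α, hα, rfl⟩
    by_cases h : α ∈ P
    · exact hA _ α h rfl
    · rw [← hsneg α hα]
      exact hA _ _ (hnegP α hα h) rfl
  have hword : ∀ g ∈ G, ∃ L : List V, (∀ δ ∈ L, δ ∈ Δ) ∧ (L.map s).prod = g := by
    intro g hg
    induction hg using Subgroup.closure_induction'' with
    | one => exact ⟨[], by simp, by simp⟩
    | mem g hg => obtain ⟨α, hα, rfl⟩ := hg; exact ⟨[α], by simpa using hα, by simp⟩
    | inv_mem g hg =>
      obtain ⟨α, hα, rfl⟩ := hg
      rw [inv_eq_of_mul_eq_one_left (hs2 α (hΔΦ α hα))]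
      exact ⟨[α], by simpa using hα, by simp⟩
    | mul a b _ _ ha hb =>
      obtain ⟨L, hL, rfl⟩ := ha
      obtain ⟨M, hM, rfl⟩ := hb
      refine ⟨L ++ M, ?_, by simp⟩
      intro δ hδ
      rcases List.mem_append.1 hδ with h | h
      · exact hL δ h
      · exact hM δ h
  have hLW : ∀ L : List V, (∀ δ ∈ L, δ ∈ Δ) → (L.map s).prod ∈ W := by
    intro L hL
    refine Subgroup.list_prod_mem _ ?_
    intro x hx
    obtain ⟨δ, hδ, rfl⟩ := List.mem_map.1 hx
    exact hWm δ (hΔΦ δ (hL δ hδ))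
  have hexch : ∀ L : List V, (∀ δ ∈ L, δ ∈ Δ) → ∀ α ∈ Δ, (L.map s).prod α ∉ P →
      ∃ L' : List V, (∀ δ ∈ L', δ ∈ Δ) ∧ L'.length < L.length ∧
        (L'.map s).prod = (L.map s).prod * s α := by
    intro L
    induction L with
    | nil =>
      intro _ α hα h
      exact absurd (hΔP α hα) (by simpa using h)
    | cons β L ih =>
      intro hL α hα h
      have hL' : ∀ δ ∈ L, δ ∈ Δ := fun δ hδ => hL δ (List.mem_cons_of_mem _ hδ)
      have hβ : β ∈ Δ := hL β List.mem_cons_self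
      by_cases hc : (L.map s).prod α ∈ P
      · have heq : (L.map s).prod α = β := by
          by_contra hne
          apply h
          have := hsimple β hβ _ hc hne
          simpa using this
        refine ⟨L, hL', by simp, ?_⟩
        have h1 := hconj _ (hLW L hL') α (hΔΦ α hα)
        rw [heq] at h1
        rw [List.map_cons, List.prod_cons, h1]
        simp only [mul_assoc, inv_mul_cancel_left]
        rw [hs2 α (hΔΦ α hα), mul_one]
      · obtain ⟨L', h1, h2, h3⟩ := ih hL' α hα hc
        refine ⟨β :: L', ?_, by simpa using h2, by simp [h3, mul_assoc]⟩
        intro δ hδ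
        rcases List.mem_cons.1 hδ with rfl | h
        · exact hβ
        · exact h1 δ h
  let U : Subgroup (V ≃ₗ[ℝ] V) := Subgroup.closure (s '' {α ∈ Φ | coroot α v = 0})
  have hmain : ∀ n : ℕ, ∀ L : List V, L.length = n → (∀ δ ∈ L, δ ∈ Δ) →
      (L.map s).prod v = v → (L.map s).prod ∈ U := by
    intro n
    induction n using Nat.strong_induction_on with
    | _ n ih =>
    intro L hn hL hv
    rcases List.eq_nil_or_concat' L with rfl | ⟨M, δ, rfl⟩
    · simp
    have hM : ∀ δ ∈ M, δ ∈ Δ := fun x hx => hL x (by simp [hx])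
    have hδ : δ ∈ Δ := hL δ (by simp)
    have hδΦ := hΔΦ δ hδ
    have hprod : ((M ++ [δ]).map s).prod = (M.map s).prod * s δ := by simp
    simp only [List.length_append, List.length_singleton] at hn
    by_cases hc : (M.map s).prod δ ∈ P
    · have hgW := hLW _ hL
      have hgδ : ((M ++ [δ]).map s).prod δ = -((M.map s).prod δ) := by
        rw [hprod, LinearEquiv.mul_apply, hself δ hδΦ, map_neg]
      have h1 : coroot (((M ++ [δ]).map s).prod δ) v = coroot δ v := by
        rw [hequiv _ hgW δ hδΦ]
        congr 1
        nth_rewrite 1 [← hv]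
        exact hinv' _ _
      rw [hgδ, hcneg _ (hPΦ _ hc)] at h1
      have h2 := (hp δ hδΦ).2.1 (hPp δ (hΔP δ hδ))
      have h3 := (hp _ (hPΦ _ hc)).2.1 (hPp _ hc)
      have h4 : coroot δ v = 0 := by linarith
      have hsv : s δ v = v := by rw [hs δ hδΦ, h4]; simp
      have hsU : s δ ∈ U := Subgroup.subset_closure ⟨δ, ⟨hδΦ, h4⟩, rfl⟩
      rw [hprod] at hv ⊢
      rw [LinearEquiv.mul_apply, hsv] at hv
      exact mul_mem (ih M.length (by omega) M rfl hM hv) hsU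
    · obtain ⟨L', h1, h2, h3⟩ := hexch M hM δ hδ hc
      rw [hprod, ← h3] at hv ⊢
      exact ih L'.length (by omega) L' rfl h1 hv
  ext w
  constructor
  · rintro ⟨hw, hwv⟩
    obtain ⟨L, hL, rfl⟩ := hword w (hWG hw)
    exact hmain _ L rfl hL hwv
  · intro hw
    have hUle : U ≤ W ⊓ MulAction.stabilizer (V ≃ₗ[ℝ] V) v := by
      rw [Subgroup.closure_le]
      rintro _ ⟨α, ⟨hα, hαv⟩, rfl⟩
      refine ⟨hWm α hα, ?_⟩
      change s α v = v
      rw [hs α hα, hαv]; simp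
    have := hUle hw
    exact ⟨this.1, this.2⟩
end

section
/- The following hold: (i) R ⊆ R'; (ii) R^0 := W^0 ∩ R' is a normal subgroup of R'; (iii) every element of R' factors uniquely as u·v with u ∈ R^0 and v ∈ R, so that R' is the semidirect product of R^0 by R; and (iv) W^{0'} is a normal subgroup of W^0 and the composite of the inclusion R^0 ↪ W^0 with the quotient map W^0 → W^0/W^{0'} is an isomorphism of groups R^0 ≅ W^0/W^{0'}. -/
open scoped NNReal

/-- Data of a root subsystem with a positive functional. -/
structure RGrp.Sys {V : Type*} [AddCommGroup V] [Module ℝ V]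
    (Ψ : Set V) (c : V → Module.Dual ℝ V) (s : V → (V ≃ₗ[ℝ] V))
    (G : Subgroup (V ≃ₗ[ℝ] V)) (B : V → V → ℝ) (f : Module.Dual ℝ V) : Prop where
  fin : Ψ.Finite
  hc : ∀ α ∈ Ψ, c α α = 2
  hs : ∀ α ∈ Ψ, ∀ x : V, s α x = x - c α x • α
  red : ∀ α ∈ Ψ, ∀ t : ℝ, t • α ∈ Ψ → t = 1 ∨ t = -1
  mem : ∀ α ∈ Ψ, s α ∈ G
  stab : ∀ g ∈ G, ∀ α ∈ Ψ, g α ∈ Ψ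
  conj : ∀ g ∈ G, ∀ α ∈ Ψ, s (g α) = g * s α * g⁻¹
  Bpos : ∀ α ∈ Ψ, 0 < B α α
  Badd : ∀ x y z, B x (y + z) = B x y + B x z
  Bsmul : ∀ x (t : ℝ) z, B x (t • z) = t * B x z
  hB : ∀ β ∈ Ψ, ∀ x, c β x * B β β = 2 * B x β
  hf : ∀ α ∈ Ψ, f α ≠ 0

namespace RGrp.Sys

variable {V : Type*} [AddCommGroup V] [Module ℝ V]
    {Ψ : Set V} {c : V → Module.Dual ℝ V} {s : V → (V ≃ₗ[ℝ] V)}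
    {G : Subgroup (V ≃ₗ[ℝ] V)} {B : V → V → ℝ} {f : Module.Dual ℝ V}

theorem s_self (h : Sys Ψ c s G B f) {α : V} (ha : α ∈ Ψ) : s α α = -α := by
  rw [h.hs α ha, h.hc α ha]; module

theorem s_sq (h : Sys Ψ c s G B f) {α : V} (ha : α ∈ Ψ) : s α * s α = 1 := by
  ext x
  simp only [LinearEquiv.mul_apply, LinearEquiv.coe_one, id]
  rw [h.hs α ha, h.hs α ha x]
  simp only [map_sub, map_smul, h.hc α ha, smul_eq_mul]
  module

theorem s_inv (h : Sys Ψ c s G B f) {α : V} (ha : α ∈ Ψ) : (s α)⁻¹ = s α :=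
  inv_eq_of_mul_eq_one_left (h.s_sq ha)

theorem neg_mem (h : Sys Ψ c s G B f) {α : V} (ha : α ∈ Ψ) : -α ∈ Ψ := by
  rw [← h.s_self ha]; exact h.stab _ (h.mem α ha) _ ha

theorem s_neg (h : Sys Ψ c s G B f) {α : V} (ha : α ∈ Ψ) : s (-α) = s α := by
  have := h.conj _ (h.mem α ha) _ ha
  rw [h.s_self ha] at this
  rw [this]; group

theorem exists_simple (h : Sys Ψ c s G B f) : ∃ D : Set V, D ⊆ {α ∈ Ψ | 0 < f α} ∧
    (∀ α ∈ Ψ, 0 < f α → α ∈ Submodule.span ℝ≥0 D) ∧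
    (∀ δ ∈ D, ∀ β ∈ Ψ, 0 < f β → β ≠ δ → 0 < f (s δ β)) := by
  classical
  set P : Set V := {α ∈ Ψ | 0 < f α} with hP
  have hPf : P.Finite := h.fin.subset (fun x hx => hx.1)
  have hSf : {D : Set V | D ⊆ P ∧ P ⊆ Submodule.span ℝ≥0 D}.Finite :=
    hPf.finite_subsets.subset (fun D hD => hD.1)
  obtain ⟨D, hD⟩ := hSf.exists_minimal ⟨P, le_refl P, Submodule.subset_span⟩
  refine ⟨D, hD.prop.1, fun α ha hp => hD.prop.2 ⟨ha, hp⟩, ?_⟩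
  intro δ hδ β hβ hfβ hne
  have hδP := hD.prop.1 hδ
  have hsm : s δ β ∈ Ψ := h.stab _ (h.mem δ hδP.1) _ hβ
  by_contra hneg
  have hneg' : f (s δ β) < 0 := lt_of_le_of_ne (not_lt.mp hneg) (h.hf _ hsm)
  have hγ : -(s δ β) ∈ P := ⟨h.neg_mem hsm, by simpa using hneg'⟩
  have hins : insert δ (D \ {δ}) = D := by simp [Set.insert_eq_of_mem hδ]
  have h1 := hD.prop.2 (show β ∈ P from ⟨hβ, hfβ⟩)
  have h2 := hD.prop.2 hγ
  rw [SetLike.mem_coe, ← hins, Submodule.mem_span_insert] at h1 h2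
  obtain ⟨b, z1, hz1, e1⟩ := h1
  obtain ⟨b', z2, hz2, e2⟩ := h2
  have key : ∀ z ∈ Submodule.span ℝ≥0 (D \ {δ}), z = 0 ∨ 0 < f z := by
    intro z hz
    induction hz using Submodule.span_induction with
    | mem x hx => exact Or.inr (hD.prop.1 hx.1).2
    | zero => exact Or.inl rfl
    | add x y _ _ hx hy =>
      rcases hx with rfl | hx
      · simpa using hy
      · rcases hy with rfl | hy
        · right; simpa using hx
        · right; rw [map_add]; exact add_pos hx hy
    | smul a x _ hx =>
      rcases hx with rfl | hx
      · left; simp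
      · rcases eq_or_ne a 0 with rfl | ha
        · left; simp
        · right
          rw [NNReal.smul_def, map_smul, smul_eq_mul]
          exact mul_pos (by exact_mod_cast pos_iff_ne_zero.mpr ha) hx
  rw [NNReal.smul_def] at e1 e2
  have e3 : (c δ β - b - b') • δ = z1 + z2 := by
    rw [h.hs δ hδP.1] at e2
    have : c δ β • δ = β + ((b':ℝ) • δ + z2) := by rw [← e2]; abel
    rw [sub_smul, sub_smul, this, e1]
    abel
  rcases lt_or_ge 0 (c δ β - b - b') with hpos | hle
  · -- δ in span of the others
    have hδs : δ ∈ Submodule.span ℝ≥0 (D \ {δ}) := by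
      have hmem := Submodule.smul_mem _ (Real.toNNReal (c δ β - b - b')⁻¹)
        (Submodule.add_mem _ hz1 hz2)
      rw [← e3, NNReal.smul_def, Real.coe_toNNReal _ (inv_pos.mpr hpos).le, smul_smul,
        inv_mul_cancel₀ hpos.ne', one_smul] at hmem
      exact hmem
    have hle : D ≤ D \ {δ} := by
      refine hD.le_of_le ⟨Set.sdiff_subset.trans hD.prop.1, ?_⟩ Set.sdiff_subset
      refine hD.prop.2.trans ?_
      rw [SetLike.coe_subset_coe, Submodule.span_le]
      intro x hx
      by_cases hxd : x = δ
      · rw [hxd]; exact hδs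
      · exact Submodule.subset_span ⟨hx, hxd⟩
    exact (hle hδ).2 rfl
  · have hf3 : f z1 + f z2 ≤ 0 := by
      rw [← map_add, ← e3, map_smul, smul_eq_mul]
      exact mul_nonpos_of_nonpos_of_nonneg hle hδP.2.le
    have hz10 : z1 = 0 := by
      rcases key z1 hz1 with h0 | h0
      · exact h0
      · rcases key z2 hz2 with h0' | h0'
        · rw [h0', map_zero] at hf3; linarith
        · linarith
    rw [hz10, add_zero] at e1
    rcases h.red δ hδP.1 b (e1 ▸ hβ) with hb | hb
    · rw [hb, one_smul] at e1; exact hne e1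
    · have := b.2
      have hb' : (b:ℝ) = -1 := hb
      have : (0:ℝ) ≤ b := b.2
      linarith

theorem gen (h : Sys Ψ c s G B f) {D : Set V} (hD : D ⊆ {α ∈ Ψ | 0 < f α})
    (hspan : ∀ α ∈ Ψ, 0 < f α → α ∈ Submodule.span ℝ≥0 D)
    (hsim : ∀ δ ∈ D, ∀ β ∈ Ψ, 0 < f β → β ≠ δ → 0 < f (s δ β)) :
    ∀ α ∈ Ψ, s α ∈ Subgroup.closure (s '' D) := by
  have hpos : ∀ α ∈ Ψ, 0 < f α → s α ∈ Subgroup.closure (s '' D) := by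
    by_contra hcon
    push Not at hcon
    have hbf : {α ∈ Ψ | 0 < f α ∧ s α ∉ Subgroup.closure (s '' D)}.Finite :=
      h.fin.subset (fun x hx => hx.1)
    obtain ⟨α, ⟨ha, hfa, hna⟩, hmin⟩ := Set.exists_min_image _ f hbf
      (by obtain ⟨α, h1, h2, h3⟩ := hcon; exact ⟨α, h1, h2, h3⟩)
    have haD : α ∉ D := fun hh => hna (Subgroup.subset_closure ⟨α, hh, rfl⟩)
    have hex : ∃ δ ∈ D, 0 < B α δ := by
      by_contra hno
      push Not at hno
      have hall : ∀ z ∈ Submodule.span ℝ≥0 D, B α z ≤ 0 := by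
        intro z hz
        induction hz using Submodule.span_induction with
        | mem x hx => exact hno x hx
        | zero => have := h.Bsmul α 0 0; simp at this; exact this.le
        | add x y _ _ hx hy => rw [h.Badd]; linarith
        | smul a x _ hx =>
          rw [NNReal.smul_def, h.Bsmul]
          exact mul_nonpos_of_nonneg_of_nonpos a.2 hx
      have := hall α (hspan α ha hfa)
      have := h.Bpos α ha
      linarith
    obtain ⟨δ, hδ, hBδ⟩ := hex
    have hδP := hD hδ
    have hcpos : 0 < c δ α := by
      have h1 := h.hB δ hδP.1 α
      have h2 := h.Bpos δ hδP.1
      by_contra hle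
      have := mul_nonpos_of_nonpos_of_nonneg (not_lt.mp hle) h2.le
      linarith
    have hne : α ≠ δ := fun hh => haD (hh ▸ hδ)
    have hx := hsim δ hδ α ha hfa hne
    have hxm := h.stab _ (h.mem δ hδP.1) _ ha
    have hlt : f (s δ α) < f α := by
      rw [h.hs δ hδP.1, map_sub, map_smul, smul_eq_mul]
      have := mul_pos hcpos hδP.2
      linarith
    have hin : s (s δ α) ∈ Subgroup.closure (s '' D) := by
      by_contra hnn
      exact absurd (hmin _ ⟨hxm, hx, hnn⟩) (not_le.mpr hlt)
    rw [h.conj _ (h.mem δ hδP.1) _ ha] at hin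
    have hsδ : s δ ∈ Subgroup.closure (s '' D) := Subgroup.subset_closure ⟨δ, hδ, rfl⟩
    have := mul_mem (mul_mem (inv_mem hsδ) hin) hsδ
    apply hna
    convert this using 1
    group
  intro α ha
  rcases lt_or_gt_of_ne (h.hf α ha) with hn | hp
  · rw [← h.s_neg ha]
    exact hpos _ (h.neg_mem ha) (by simpa using hn)
  · exact hpos _ ha hp

theorem prod_mem (h : Sys Ψ c s G B f) {D : Set V} (hD : D ⊆ {α ∈ Ψ | 0 < f α})
    (l : List V) (hl : ∀ x ∈ l, x ∈ D) : (l.map s).prod ∈ G := by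
  apply Subgroup.list_prod_mem
  intro x hx
  obtain ⟨a, ha, rfl⟩ := List.mem_map.mp hx
  exact h.mem a (hD (hl a ha)).1

theorem exists_list (h : Sys Ψ c s G B f) {D : Set V} (hD : D ⊆ {α ∈ Ψ | 0 < f α})
    {w : V ≃ₗ[ℝ] V} (hw : w ∈ Subgroup.closure (s '' D)) :
    ∃ l : List V, (∀ x ∈ l, x ∈ D) ∧ (l.map s).prod = w := by
  induction hw using Subgroup.closure_induction with
  | mem x hx =>
    obtain ⟨a, ha, rfl⟩ := hx
    exact ⟨[a], by simpa using ha, by simp⟩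
  | one => exact ⟨[], by simp, by simp⟩
  | mul x y _ _ hx hy =>
    obtain ⟨l, hl, rfl⟩ := hx
    obtain ⟨m, hm, rfl⟩ := hy
    refine ⟨l ++ m, ?_, by simp⟩
    intro x hx
    rcases List.mem_append.mp hx with hx | hx
    · exact hl x hx
    · exact hm x hx
  | inv x _ hx =>
    obtain ⟨l, hl, rfl⟩ := hx
    refine ⟨l.reverse, by simpa using hl, ?_⟩
    rw [List.prod_inv_reverse, List.map_reverse, List.map_map]
    congr 2
    apply List.map_congr_left
    intro a ha
    exact (h.s_inv (hD (hl a ha)).1).symm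

theorem exchange (h : Sys Ψ c s G B f) {D : Set V} (hD : D ⊆ {α ∈ Ψ | 0 < f α})
    (hsim : ∀ δ ∈ D, ∀ β ∈ Ψ, 0 < f β → β ≠ δ → 0 < f (s δ β))
    {a : V} (ha : a ∈ D) (t : List V) (ht : ∀ x ∈ t, x ∈ D)
    (hneg : f ((t.map s).prod a) < 0) :
    ∃ t' : List V, (∀ x ∈ t', x ∈ D) ∧ t'.length + 1 = t.length ∧
      (t.map s).prod * s a = (t'.map s).prod := by
  induction t with
  | nil =>
    have := (hD ha).2
    simp at hneg
    linarith
  | cons d t ih =>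
    have hd : d ∈ D := ht d (by simp)
    have ht1 : ∀ x ∈ t, x ∈ D := fun x hx => ht x (by simp [hx])
    have hv := h.prod_mem hD t ht1
    have hx := h.stab _ hv _ (hD ha).1
    rcases lt_or_gt_of_ne (h.hf _ hx) with hn | hp
    · obtain ⟨t', h1, h2, h3⟩ := ih ht1 hn
      refine ⟨d :: t', ?_, by simp [h2], ?_⟩
      · intro x hx
        rcases List.mem_cons.mp hx with rfl | hx
        · exact hd
        · exact h1 x hx
      · simp [mul_assoc, h3]
    · have heq : (t.map s).prod a = d := by
        by_contra hne
        have := hsim d hd _ hx hp hne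
        simp only [List.map_cons, List.prod_cons, LinearEquiv.mul_apply] at hneg
        linarith
      refine ⟨t, ht1, by simp, ?_⟩
      have hc := h.conj _ hv _ (hD ha).1
      rw [heq] at hc
      rw [List.map_cons, List.prod_cons, hc]
      have hq := h.s_sq (hD ha).1
      calc _ = (t.map s).prod * (s a * s a) := by group
        _ = _ := by rw [hq, mul_one]

theorem list_eq_one (h : Sys Ψ c s G B f) {D : Set V} (hD : D ⊆ {α ∈ Ψ | 0 < f α})
    (hsim : ∀ δ ∈ D, ∀ β ∈ Ψ, 0 < f β → β ≠ δ → 0 < f (s δ β)) (n : ℕ) :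
    ∀ l : List V, l.length ≤ n → (∀ x ∈ l, x ∈ D) →
    (∀ α ∈ Ψ, 0 < f α → 0 < f ((l.map s).prod α)) → (l.map s).prod = 1 := by
  induction n with
  | zero =>
    intro l hl _ _
    have : l = [] := List.length_eq_zero_iff.mp (Nat.le_zero.mp hl)
    simp [this]
  | succ n ih =>
    intro l hl hlD hpos
    rcases List.eq_nil_or_concat l with rfl | ⟨t, a, rfl⟩
    · simp
    · have ha : a ∈ D := hlD a (by simp)
      have ht : ∀ x ∈ t, x ∈ D := fun x hx => hlD x (by simp [hx])
      have hp := hpos a (hD ha).1 (hD ha).2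
      simp only [List.concat_eq_append, List.map_append, List.prod_append, List.map_cons,
        List.map_nil, List.prod_cons, List.prod_nil, mul_one] at hp hpos ⊢
      rw [LinearEquiv.mul_apply, h.s_self (hD ha).1, map_neg, map_neg] at hp
      obtain ⟨t', h1, h2, h3⟩ := h.exchange hD hsim ha t ht (by linarith)
      rw [h3] at hpos ⊢
      refine ih t' ?_ h1 hpos
      simp at hl
      omega

theorem eq_one (h : Sys Ψ c s G B f) {w : V ≃ₗ[ℝ] V}
    (hw : w ∈ Subgroup.closure (s '' Ψ))
    (hpos : ⇑w '' {α ∈ Ψ | 0 < f α} = {α ∈ Ψ | 0 < f α}) : w = 1 := by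
  obtain ⟨D, hD, hspan, hsim⟩ := h.exists_simple
  have hw' : w ∈ Subgroup.closure (s '' D) := by
    refine (Subgroup.closure_le _).mpr ?_ hw
    rintro _ ⟨α, ha, rfl⟩
    exact h.gen hD hspan hsim α ha
  obtain ⟨l, hl, rfl⟩ := h.exists_list hD hw'
  refine h.list_eq_one hD hsim l.length l le_rfl hl ?_
  intro α ha hfa
  exact (hpos.subset ⟨α, ⟨ha, hfa⟩, rfl⟩).2

theorem exists_w (h : Sys Ψ c s G B f) {g : V ≃ₗ[ℝ] V} (hg : g ∈ G) :
    ∃ w ∈ Subgroup.closure (s '' Ψ),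
      ⇑(w * g) '' {α ∈ Ψ | 0 < f α} = {α ∈ Ψ | 0 < f α} := by
  obtain ⟨D, hD, hspan, hsim⟩ := h.exists_simple
  have hWG : Subgroup.closure (s '' Ψ) ≤ G := by
    rw [Subgroup.closure_le]
    rintro _ ⟨α, ha, rfl⟩
    exact h.mem α ha
  let N : (V ≃ₗ[ℝ] V) → Set V := fun k => {β ∈ Ψ | 0 < f β ∧ f (k β) < 0}
  have hN : ∀ k, (N k).Finite := fun k => h.fin.subset (fun x hx => hx.1)
  have hmin : ∃ w ∈ Subgroup.closure (s '' Ψ), ∀ w' ∈ Subgroup.closure (s '' Ψ),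
      (N (w * g)).ncard ≤ (N (w' * g)).ncard := by
    obtain ⟨w, hw, hm⟩ := (measure fun w : V ≃ₗ[ℝ] V => (N (w * g)).ncard).wf.has_min
      (Subgroup.closure (s '' Ψ) : Set (V ≃ₗ[ℝ] V)) ⟨1, one_mem _⟩
    exact ⟨w, hw, fun w' hw' => not_lt.mp (hm w' hw')⟩
  obtain ⟨w, hw, hm⟩ := hmin
  refine ⟨w, hw, ?_⟩
  have hk : w * g ∈ G := mul_mem (hWG hw) hg
  set k := w * g with hkdef
  have hki : ∀ x, k (k⁻¹ x) = x := fun x => by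
    rw [← LinearEquiv.mul_apply]; simp
  have hsimple : ∀ δ ∈ D, 0 < f (k⁻¹ δ) := by
    intro δ hδ
    have hδP := hD hδ
    have hm1 := h.stab _ (inv_mem hk) _ hδP.1
    by_contra hcon
    have hneg := lt_of_le_of_ne (not_lt.mp hcon) (h.hf _ hm1)
    have hle := hm (s δ * w) (mul_mem (Subgroup.subset_closure ⟨δ, hδP.1, rfl⟩) hw)
    rw [mul_assoc, ← hkdef] at hle
    refine absurd hle (not_le.mpr (Set.ncard_lt_ncard ?_ (hN _)))
    refine ⟨?_, ?_⟩
    · rintro β ⟨hβ, hfβ, hlt⟩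
      refine ⟨hβ, hfβ, ?_⟩
      by_contra hge
      have hkβ := h.stab _ hk _ hβ
      have hpos := lt_of_le_of_ne (not_lt.mp hge) (h.hf _ hkβ).symm
      rw [LinearEquiv.mul_apply] at hlt
      by_cases he : k β = δ
      · have : k⁻¹ δ = β := by rw [← he, ← LinearEquiv.mul_apply]; simp
        rw [this] at hneg; linarith
      · have := hsim δ hδ _ hkβ hpos he
        linarith
    · intro hsub
      have h1 : -(k⁻¹ δ) ∈ N k := by
        refine ⟨h.neg_mem hm1, by simpa using hneg, ?_⟩
        rw [map_neg, hki, map_neg]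
        linarith [hδP.2]
      have h2 := (hsub h1).2.2
      rw [LinearEquiv.mul_apply, map_neg, hki, map_neg, h.s_self hδP.1, neg_neg] at h2
      linarith [hδP.2]
  have hinv : ∀ α ∈ Ψ, 0 < f α → 0 < f (k⁻¹ α) := by
    intro α ha hfa
    have hall : ∀ z ∈ Submodule.span ℝ≥0 D, 0 ≤ f (k⁻¹ z) := by
      intro z hz
      induction hz using Submodule.span_induction with
      | mem x hx => exact (hsimple x hx).le
      | zero => simp
      | add x y _ _ hx hy => rw [map_add, map_add]; linarith
      | smul a x _ hx =>
        rw [NNReal.smul_def, map_smul, map_smul, smul_eq_mul]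
        exact mul_nonneg a.2 hx
    exact lt_of_le_of_ne (hall α (hspan α ha hfa))
      (h.hf _ (h.stab _ (inv_mem hk) _ ha)).symm
  apply Set.Subset.antisymm
  · rintro _ ⟨α, ⟨ha, hfa⟩, rfl⟩
    have hkα := h.stab _ hk _ ha
    refine ⟨hkα, ?_⟩
    by_contra hcon
    have hneg := lt_of_le_of_ne (not_lt.mp hcon) (h.hf _ hkα)
    have := hinv _ (h.neg_mem hkα) (by simpa using hneg)
    have hkk : k⁻¹ (k α) = α := by rw [← LinearEquiv.mul_apply]; simp
    rw [map_neg, hkk, map_neg] at this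
    linarith
  · rintro α ⟨ha, hfa⟩
    exact ⟨k⁻¹ α, ⟨h.stab _ (inv_mem hk) _ ha, hinv α ha hfa⟩, hki α⟩

end RGrp.Sys



/- STATEMENT 9: With `Φ⁰' ⊆ Φ⁰` a Γ-stable subset, `W⁰' := ⟨s_α : α ∈ Φ⁰'⟩`,
`(Φ⁰')⁺ := Φ⁰' ∩ (Φ⁰)⁺`, `R' := {g ∈ Γ | g((Φ⁰')⁺) = (Φ⁰')⁺}` and
`R := {g ∈ Γ | g((Φ⁰)⁺) = (Φ⁰)⁺}`, the following hold:
(i) `R ⊆ R'`;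
(ii) `R⁰ := W⁰ ∩ R'` is a normal subgroup of `R'`;
(iii) every element of `R'` factors uniquely as `u·v` with `u ∈ R⁰` and `v ∈ R`, so that
`R'` is the semidirect product of `R⁰` by `R`;
(iv) `W⁰'` is a normal subgroup of `W⁰`, and the composite of the inclusion `R⁰ ↪ W⁰`
with the quotient map `W⁰ → W⁰/W⁰'` is an isomorphism `R⁰ ≅ W⁰/W⁰'` (formulated
elementwise: each `w ∈ W⁰` lies in the `W⁰'`-coset of exactly one element of `R⁰`). -/
theorem R_group_semidirect_decomposition
    (V : Type*) [AddCommGroup V] [Module ℝ V] [FiniteDimensional ℝ V]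
    (Φ : Set V) (hfin : Φ.Finite) (h0 : (0 : V) ∉ Φ)
    (hspan : Submodule.span ℝ Φ = ⊤)
    (coroot : V → Module.Dual ℝ V)
    (hcoroot : ∀ α ∈ Φ, coroot α α = 2)
    (s : V → (V ≃ₗ[ℝ] V))
    (hs : ∀ α ∈ Φ, ∀ x : V, s α x = x - coroot α x • α)
    (hmaps : ∀ α ∈ Φ, ⇑(s α) '' Φ = Φ)
    (hred : ∀ α ∈ Φ, ∀ t : ℝ, t • α ∈ Φ → t = 1 ∨ t = -1)
    (Γ : Subgroup (V ≃ₗ[ℝ] V)) (hΓ : ∀ g ∈ Γ, ⇑g '' Φ = Φ)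
    (Φ0 : Set V) (hΦ0 : Φ0 = {α ∈ Φ | s α ∈ Γ})
    (W0 : Subgroup (V ≃ₗ[ℝ] V)) (hW0 : W0 = Subgroup.closure (s '' Φ0))
    (f : Module.Dual ℝ V) (hf : ∀ α ∈ Φ0, f α ≠ 0)
    (Φ0plus : Set V) (hΦ0plus : Φ0plus = {α ∈ Φ0 | 0 < f α})
    (Φ0' : Set V) (hΦ0'sub : Φ0' ⊆ Φ0)
    (hΦ0'stable : ∀ g ∈ Γ, ⇑g '' Φ0' = Φ0')
    (W0' : Subgroup (V ≃ₗ[ℝ] V)) (hW0' : W0' = Subgroup.closure (s '' Φ0'))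
    (Φ0'plus : Set V) (hΦ0'plus : Φ0'plus = Φ0' ∩ Φ0plus)
    (R' : Set (V ≃ₗ[ℝ] V)) (hR' : R' = {g | g ∈ Γ ∧ ⇑g '' Φ0'plus = Φ0'plus})
    (R : Set (V ≃ₗ[ℝ] V)) (hR : R = {g | g ∈ Γ ∧ ⇑g '' Φ0plus = Φ0plus})
    (R0 : Set (V ≃ₗ[ℝ] V)) (hR0 : R0 = {w | w ∈ W0 ∧ w ∈ R'}) :
    -- (i) R ⊆ R'
    R ⊆ R' ∧
    -- (ii) R⁰ is a normal subgroup of R'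
    (∀ g ∈ R', ∀ w ∈ R0, g * w * g⁻¹ ∈ R0) ∧
    -- (iii) unique factorization of elements of R' as u·v with u ∈ R⁰, v ∈ R
    (∀ g ∈ R', ∃! p : (V ≃ₗ[ℝ] V) × (V ≃ₗ[ℝ] V),
      p.1 ∈ R0 ∧ p.2 ∈ R ∧ g = p.1 * p.2) ∧
    -- (iv) W⁰' ⊴ W⁰ and R⁰ → W⁰/W⁰' is bijective
    (W0' ≤ W0 ∧ (∀ w ∈ W0, ∀ u ∈ W0', w * u * w⁻¹ ∈ W0') ∧
      (∀ w ∈ W0, ∃! r : V ≃ₗ[ℝ] V, r ∈ R0 ∧ w⁻¹ * r ∈ W0')) := by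
  classical
  have hco : ∀ g : V ≃ₗ[ℝ] V, ⇑g '' Φ = Φ → ∀ α ∈ Φ, ∀ x, coroot (g α) (g x) = coroot α x := by
    intro g hg α ha x
    have hgα : g α ∈ Φ := hg.subset ⟨α, ha, rfl⟩
    have := Module.Dual.eq_of_preReflection_mapsTo (x := g α) hfin hspan
      (f := coroot (g α)) (g := (coroot α).comp g.symm.toLinearMap)
      (hcoroot _ hgα)
      (by
        intro y hy
        rw [Module.preReflection_apply, ← hs _ hgα]
        exact (hmaps _ hgα).subset ⟨y, hy, rfl⟩)
      (by simp [hcoroot α ha])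
      (by
        intro y hy
        obtain ⟨z, hz, rfl⟩ := hg.symm.subset hy
        rw [Module.preReflection_apply]
        have h1 := hg.subset ⟨_, (hmaps α ha).subset ⟨z, hz, rfl⟩, rfl⟩
        rw [hs α ha, map_sub, map_smul] at h1
        simpa using h1)
    rw [this]; simp
  have hconj : ∀ g ∈ Γ, ∀ α ∈ Φ, s (g α) = g * s α * g⁻¹ := by
    intro g hg α ha
    have hgα : g α ∈ Φ := (hΓ g hg).subset ⟨α, ha, rfl⟩
    rw [eq_mul_inv_iff_mul_eq]
    ext x
    rw [LinearEquiv.mul_apply, LinearEquiv.mul_apply, hs _ hgα, hs _ ha,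
      hco g (hΓ g hg) α ha, map_sub, map_smul]
  let B : V → V → ℝ := fun x y => ∑ γ ∈ hfin.toFinset, coroot γ x * coroot γ y
  have hBpos : ∀ α ∈ Φ, 0 < B α α := by
    intro α ha
    refine Finset.sum_pos' (fun i _ => mul_self_nonneg _) ⟨α, by simpa using ha, ?_⟩
    rw [hcoroot α ha]; norm_num
  have hBadd : ∀ x y z, B x (y + z) = B x y + B x z := by
    intro x y z
    simp only [B, map_add, mul_add, Finset.sum_add_distrib]
  have hBsmul : ∀ x (t : ℝ) z, B x (t • z) = t * B x z := by
    intro x t z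
    simp only [B, map_smul, smul_eq_mul, Finset.mul_sum]
    exact Finset.sum_congr rfl (fun i _ => by ring)
  have hBcomm : ∀ x y, B x y = B y x := by
    intro x y
    exact Finset.sum_congr rfl (fun i _ => by ring)
  have hBinv : ∀ β ∈ Φ, ∀ x y, B (s β x) (s β y) = B x y := by
    intro β hβ x y
    symm
    refine Finset.sum_nbij (s β) ?_ ?_ ?_ ?_
    · intro a ha
      simp only [Set.Finite.mem_toFinset] at ha ⊢
      exact (hmaps β hβ).subset ⟨a, ha, rfl⟩
    · exact (s β).injective.injOn
    · intro a ha
      simp only [Set.Finite.coe_toFinset] at ha ⊢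
      exact (hmaps β hβ).symm.subset ha
    · intro a ha
      simp only [Set.Finite.mem_toFinset] at ha
      rw [hco _ (hmaps β hβ) a ha, hco _ (hmaps β hβ) a ha]
  have hBc : ∀ β ∈ Φ, ∀ x, coroot β x * B β β = 2 * B x β := by
    intro β hβ x
    have h1 := hBinv β hβ β x
    have h2 : s β β = (-1 : ℝ) • β := by rw [hs β hβ, hcoroot β hβ]; module
    have h3 : s β x = x + (-coroot β x) • β := by rw [hs β hβ]; module
    rw [h2, hBcomm, hBsmul, h3, hBcomm, hBadd, hBsmul] at h1
    rw [hBcomm x β]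
    linarith
  have mk : ∀ Ψ : Set V, Ψ ⊆ Φ0 → (∀ g ∈ Γ, ⇑g '' Ψ = Ψ) →
      RGrp.Sys Ψ coroot s Γ B f := by
    intro Ψ hΨ hst
    have hΨΦ : ∀ α ∈ Ψ, α ∈ Φ := fun α ha => by
      have := hΨ ha; rw [hΦ0] at this; exact this.1
    exact
      { fin := hfin.subset hΨΦ
        hc := fun α ha => hcoroot α (hΨΦ α ha)
        hs := fun α ha => hs α (hΨΦ α ha)
        red := fun α ha t ht => hred α (hΨΦ α ha) t (hΨΦ _ ht)
        mem := fun α ha => by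
          have := hΨ ha; rw [hΦ0] at this; exact this.2
        stab := fun g hg α ha => (hst g hg).subset ⟨α, ha, rfl⟩
        conj := fun g hg α ha => hconj g hg α (hΨΦ α ha)
        Bpos := fun α ha => hBpos α (hΨΦ α ha)
        Badd := hBadd
        Bsmul := hBsmul
        hB := fun β hβ => hBc β (hΨΦ β hβ)
        hf := fun α ha => hf α (hΨ ha) }
  have hΦ0st1 : ∀ g ∈ Γ, ∀ α ∈ Φ0, g α ∈ Φ0 := by
    intro g hg α ha
    rw [hΦ0] at ha ⊢
    refine ⟨(hΓ g hg).subset ⟨α, ha.1, rfl⟩, ?_⟩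
    rw [hconj g hg α ha.1]
    exact mul_mem (mul_mem hg ha.2) (inv_mem hg)
  have hΦ0st : ∀ g ∈ Γ, ⇑g '' Φ0 = Φ0 := by
    intro g hg
    apply Set.Subset.antisymm
    · rintro _ ⟨α, ha, rfl⟩
      exact hΦ0st1 g hg α ha
    · intro α ha
      refine ⟨g⁻¹ α, hΦ0st1 _ (inv_mem hg) α ha, ?_⟩
      rw [← LinearEquiv.mul_apply]; simp
  have S0 := mk Φ0 le_rfl hΦ0st
  have S1 := mk Φ0' hΦ0'sub hΦ0'stable
  have hP' : Φ0'plus = {α ∈ Φ0' | 0 < f α} := by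
    rw [hΦ0'plus, hΦ0plus]
    ext x
    exact ⟨fun h => ⟨h.1, h.2.2⟩, fun h => ⟨h.1, hΦ0'sub h.1, h.2⟩⟩
  have hclΓ : ∀ g ∈ Γ, ∀ Ψ : Set V, Ψ ⊆ Φ0 → (∀ g ∈ Γ, ⇑g '' Ψ = Ψ) →
      ∀ u ∈ Subgroup.closure (s '' Ψ), g * u * g⁻¹ ∈ Subgroup.closure (s '' Ψ) := by
    intro g hg Ψ hΨ hst u hu
    induction hu using Subgroup.closure_induction with
    | mem x hx =>
      obtain ⟨α, ha, rfl⟩ := hx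
      have := hΨ ha
      rw [hΦ0] at this
      rw [← hconj g hg α this.1]
      exact Subgroup.subset_closure ⟨_, (hst g hg).subset ⟨α, ha, rfl⟩, rfl⟩
    | one => simp
    | mul x y _ _ hx hy => convert mul_mem hx hy using 1; group
    | inv x _ hx => convert inv_mem hx using 1; group
  have hW0Γ : W0 ≤ Γ := by
    rw [hW0, Subgroup.closure_le]
    rintro _ ⟨α, ha, rfl⟩
    exact S0.mem α ha
  have hWW : W0' ≤ W0 := by
    rw [hW0, hW0']
    exact Subgroup.closure_mono (Set.image_mono hΦ0'sub)
  -- stabilizers are subgroups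
  have stmul : ∀ (P : Set V) (g k : V ≃ₗ[ℝ] V), ⇑g '' P = P → ⇑k '' P = P →
      ⇑(g * k) '' P = P := by
    intro P g k hg hk
    have : ⇑(g * k) = g ∘ k := rfl
    rw [this, Set.image_comp, hk, hg]
  have stinv : ∀ (P : Set V) (g : V ≃ₗ[ℝ] V), ⇑g '' P = P → ⇑(g⁻¹) '' P = P := by
    intro P g hg
    conv_lhs => rw [← hg]
    rw [← Set.image_comp]
    have : ⇑(g⁻¹) ∘ ⇑g = id := by
      ext x
      change (g⁻¹ * g) x = x
      simp
    rw [this, Set.image_id]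
  have R'mul : ∀ g ∈ R', ∀ k ∈ R', g * k ∈ R' := by
    rw [hR']
    exact fun g hg k hk => ⟨mul_mem hg.1 hk.1, stmul _ _ _ hg.2 hk.2⟩
  have R'inv : ∀ g ∈ R', g⁻¹ ∈ R' := by
    rw [hR']
    exact fun g hg => ⟨inv_mem hg.1, stinv _ _ hg.2⟩
  have Rmul : ∀ g ∈ R, ∀ k ∈ R, g * k ∈ R := by
    rw [hR]
    exact fun g hg k hk => ⟨mul_mem hg.1 hk.1, stmul _ _ _ hg.2 hk.2⟩
  have Rinv : ∀ g ∈ R, g⁻¹ ∈ R := by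
    rw [hR]
    exact fun g hg => ⟨inv_mem hg.1, stinv _ _ hg.2⟩
  have R'Γ : ∀ g ∈ R', g ∈ Γ := by
    rw [hR']; exact fun g hg => hg.1
  have hRR' : R ⊆ R' := by
    rw [hR, hR']
    rintro g ⟨hg, hgP⟩
    refine ⟨hg, ?_⟩
    rw [hΦ0'plus, Set.image_inter g.injective, hgP, hΦ0'stable g hg]
  have one0 : ∀ w ∈ W0, w ∈ R → w = 1 := by
    intro w hw hwR
    rw [hW0] at hw
    rw [hR, hΦ0plus] at hwR
    exact S0.eq_one hw hwR.2
  have one1 : ∀ w ∈ W0', w ∈ R' → w = 1 := by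
    intro w hw hwR
    rw [hW0'] at hw
    rw [hR', hP'] at hwR
    exact S1.eq_one hw hwR.2
  refine ⟨hRR', ?_, ?_, hWW, ?_, ?_⟩
  · intro g hg w hw
    rw [hR0] at hw ⊢
    refine ⟨?_, R'mul _ (R'mul _ hg _ hw.2) _ (R'inv _ hg)⟩
    have := hw.1
    rw [hW0] at this ⊢
    exact hclΓ g (R'Γ g hg) Φ0 le_rfl hΦ0st w this
  · intro g hg
    obtain ⟨w, hw, hwg⟩ := S0.exists_w (R'Γ g hg)
    rw [← hW0] at hw
    rw [← hΦ0plus] at hwg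
    have hwgR : w * g ∈ R := by
      rw [hR]; exact ⟨mul_mem (hW0Γ hw) (R'Γ g hg), hwg⟩
    have hwR' : w⁻¹ ∈ R' := by
      have := R'mul _ hg _ (R'inv _ (hRR' hwgR))
      convert this using 1
      group
    refine ⟨(w⁻¹, w * g), ⟨?_, hwgR, by simp⟩, ?_⟩
    · rw [hR0]; exact ⟨inv_mem hw, hwR'⟩
    · rintro ⟨u, v⟩ ⟨hu, hv, he⟩
      simp only at hu hv he
      rw [hR0] at hu
      have h1 : w * u = w * g * v⁻¹ := by rw [he]; group
      have h2 : w * u = 1 := one0 _ (mul_mem hw hu.1) (h1 ▸ Rmul _ hwgR _ (Rinv _ hv))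
      have h3 : u = w⁻¹ := eq_inv_of_mul_eq_one_right h2
      rw [he, h3]; simp
  · intro w hw u hu
    rw [hW0'] at hu ⊢
    exact hclΓ w (hW0Γ hw) Φ0' hΦ0'sub hΦ0'stable u hu
  · intro w hw
    obtain ⟨u, hu, huw⟩ := S1.exists_w (hW0Γ hw)
    have hconju := hclΓ w⁻¹ (inv_mem (hW0Γ hw)) Φ0' hΦ0'sub hΦ0'stable u hu
    rw [← hW0'] at hu hconju
    rw [← hP'] at huw
    have huwW : u * w ∈ W0 := mul_mem (hWW hu) hw
    refine ⟨u * w, ⟨?_, ?_⟩, ?_⟩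
    · rw [hR0, hR']
      exact ⟨huwW, hW0Γ huwW, huw⟩
    · convert hconju using 1; group
    · rintro r ⟨hr, hwr⟩
      rw [hR0] at hr
      have huwR : u * w ∈ R' := by rw [hR']; exact ⟨hW0Γ huwW, huw⟩
      have h1 : (u * w)⁻¹ * r ∈ W0' := by
        have := mul_mem (inv_mem hconju) hwr
        convert this using 1
        group
      have h2 := one1 _ h1 (R'mul _ (R'inv _ huwR) _ hr.2)
      exact (inv_mul_eq_one.mp h2).symm
end

section
/- The stabilizer W_λ is the semidirect product of W_λ^0 by W_λ^1: W_λ^0 is a normal subgroup of W_λ, W_λ^1 is a subgroup of W_λ, W_λ^0 ∩ W_λ^1 = {1}, and every element w ∈ W_λ factors uniquely as w = u·v with u ∈ W_λ^0 and v ∈ W_λ^1. -/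
structure RSys {L : Type*} [AddCommGroup L] (Ψ : Set (L →ₗ[ℤ] ℤ)) (coroot : (L →ₗ[ℤ] ℤ) → L)
    (s : (L →ₗ[ℤ] ℤ) → (L ≃ₗ[ℤ] L)) (v : (L →ₗ[ℤ] ℤ) →ₗ[ℤ] ℝ) : Prop where
  fin : Ψ.Finite
  two : ∀ α ∈ Ψ, α (coroot α) = 2
  hs : ∀ α ∈ Ψ, ∀ x : L, s α x = x - α x • coroot α
  maps : ∀ α ∈ Ψ, ∀ β ∈ Ψ, β.comp (s α).toLinearMap ∈ Ψ
  red : ∀ α ∈ Ψ, ∀ t : ℤ, t • α ∈ Ψ → t = 1 ∨ t = -1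
  conj : ∀ α ∈ Ψ, ∀ β ∈ Ψ, coroot (β.comp (s α).toLinearMap) = s α (coroot β)
  hv : ∀ α ∈ Ψ, v α ≠ 0

def RPos {L : Type*} [AddCommGroup L] (Ψ : Set (L →ₗ[ℤ] ℤ)) (v : (L →ₗ[ℤ] ℤ) →ₗ[ℤ] ℝ) :
    Set (L →ₗ[ℤ] ℤ) := {α | α ∈ Ψ ∧ 0 < v α}

def RSimple {L : Type*} [AddCommGroup L] (Ψ : Set (L →ₗ[ℤ] ℤ)) 
    (s : (L →ₗ[ℤ] ℤ) → (L ≃ₗ[ℤ] L)) (v : (L →ₗ[ℤ] ℤ) →ₗ[ℤ] ℝ) :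
    Set (L →ₗ[ℤ] ℤ) :=
  {α | α ∈ RPos Ψ v ∧ ∀ β ∈ RPos Ψ v, β ≠ α → β.comp (s α).toLinearMap ∈ RPos Ψ v}

theorem refl_sq {L : Type*} [AddCommGroup L] (α : L →ₗ[ℤ] ℤ) (c : L) (s : L ≃ₗ[ℤ] L)
    (h2 : α c = 2) (hs : ∀ x, s x = x - α x • c) : s * s = 1 := by
  ext x
  simp only [LinearEquiv.mul_apply, hs, map_sub, map_smul, h2, LinearEquiv.coe_one, id]
  module

theorem refl_inv {L : Type*} [AddCommGroup L] (α : L →ₗ[ℤ] ℤ) (c : L) (s : L ≃ₗ[ℤ] L)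
    (h2 : α c = 2) (hs : ∀ x, s x = x - α x • c) : s⁻¹ = s :=
  inv_eq_of_mul_eq_one_left (refl_sq α c s h2 hs)

namespace RSys
variable {L : Type*} [AddCommGroup L] {Ψ : Set (L →ₗ[ℤ] ℤ)} {coroot : (L →ₗ[ℤ] ℤ) → L}
    {s : (L →ₗ[ℤ] ℤ) → (L ≃ₗ[ℤ] L)} {v : (L →ₗ[ℤ] ℤ) →ₗ[ℤ] ℝ}

theorem sq (R : RSys Ψ coroot s v) {α} (ha : α ∈ Ψ) : s α * s α = 1 :=
  refl_sq α _ _ (R.two α ha) (R.hs α ha)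

theorem inv (R : RSys Ψ coroot s v) {α} (ha : α ∈ Ψ) : (s α)⁻¹ = s α :=
  refl_inv α _ _ (R.two α ha) (R.hs α ha)

theorem ss (R : RSys Ψ coroot s v) {α} (ha : α ∈ Ψ) (x : L) : s α (s α x) = x := by
  have := congrArg (fun f : L ≃ₗ[ℤ] L => f x) (R.sq ha)
  simpa using this

theorem comp_comp (R : RSys Ψ coroot s v) {α} (ha : α ∈ Ψ) (β : L →ₗ[ℤ] ℤ) :
    (β.comp (s α).toLinearMap).comp (s α).toLinearMap = β := by
  ext x; simp [R.ss ha]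

theorem comp_eq (R : RSys Ψ coroot s v) {α} (ha : α ∈ Ψ) (β : L →ₗ[ℤ] ℤ) :
    β.comp (s α).toLinearMap = β - β (coroot α) • α := by
  ext x; simp [R.hs α ha, mul_comm]

theorem comp_self (R : RSys Ψ coroot s v) {α} (ha : α ∈ Ψ) :
    α.comp (s α).toLinearMap = -α := by
  rw [R.comp_eq ha, R.two α ha]; module

theorem neg_mem (R : RSys Ψ coroot s v) {α} (ha : α ∈ Ψ) : -α ∈ Ψ := by
  rw [← R.comp_self ha]; exact R.maps α ha α ha

theorem coroot_neg (R : RSys Ψ coroot s v) {α} (ha : α ∈ Ψ) : coroot (-α) = - coroot α := by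
  rw [← R.comp_self ha, R.conj α ha α ha, R.hs α ha, R.two α ha]; module

theorem s_neg (R : RSys Ψ coroot s v) {α} (ha : α ∈ Ψ) : s (-α) = s α := by
  ext x
  rw [R.hs _ (R.neg_mem ha), R.hs _ ha, R.coroot_neg ha]; simp

theorem pos_or (R : RSys Ψ coroot s v) {α} (ha : α ∈ Ψ) : α ∈ RPos Ψ v ∨ -α ∈ RPos Ψ v := by
  rcases lt_or_gt_of_ne (R.hv α ha) with h | h
  · right; exact ⟨R.neg_mem ha, by simpa using h⟩
  · left; exact ⟨ha, h⟩

theorem neg_notpos {α : L →ₗ[ℤ] ℤ} (ha : α ∈ RPos Ψ v) : -α ∉ RPos Ψ v := by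
  intro h
  have h1 := ha.2
  have h2 := h.2
  simp at h2; linarith

/-- conjugation of reflections -/
theorem conj_s (R : RSys Ψ coroot s v) (w : L ≃ₗ[ℤ] L) {α β} (ha : α ∈ Ψ) (hb : β ∈ Ψ)
    (h1 : β = α.comp (w⁻¹ : L ≃ₗ[ℤ] L).toLinearMap) (h2 : coroot β = w (coroot α)) :
    s β = w * s α * w⁻¹ := by
  ext x
  rw [R.hs _ hb, LinearEquiv.mul_apply, LinearEquiv.mul_apply, R.hs _ ha, map_sub, map_smul, h2]
  have : w (w⁻¹ x) = x := by
    rw [← LinearEquiv.mul_apply]; simp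
  rw [this, h1]; rfl

theorem prop_eq (R : RSys Ψ coroot s v) {α γ} (ha : α ∈ RPos Ψ v) (hg : γ ∈ RPos Ψ v)
    (h : ∀ x, v α * (γ x : ℝ) = v γ * (α x : ℝ)) : γ = α := by
  have h1 := h (coroot α)
  have h2 := h (coroot γ)
  rw [R.two _ ha.1] at h1
  rw [R.two _ hg.1] at h2
  obtain ⟨m, hm⟩ : ∃ m, m = γ (coroot α) := ⟨_, rfl⟩
  obtain ⟨k, hk⟩ : ∃ k, k = α (coroot γ) := ⟨_, rfl⟩
  rw [← hm] at h1
  rw [← hk] at h2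
  have pa := ha.2
  have pg := hg.2
  push_cast at h1 h2
  have hmpos : 0 < m := by
    by_contra hc
    have : (m : ℝ) ≤ 0 := by exact_mod_cast (not_lt.mp hc)
    nlinarith
  have hkpos : 0 < k := by
    by_contra hc
    have : (k : ℝ) ≤ 0 := by exact_mod_cast (not_lt.mp hc)
    nlinarith
  have hmk : m * k = 4 := by
    have : (m : ℝ) * k = 4 := by
      have : v α * ((m : ℝ) * k - 4) = 0 := by linear_combination (k : ℝ) * h1 - 2 * h2
      rcases mul_eq_zero.mp this with h | h <;> linarith
    exact_mod_cast this
  have hx : ∀ x, 2 * γ x = m * α x := by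
    intro x
    have h3 := h x
    have : v α * (2 * (γ x : ℝ) - m * α x) = 0 := by
      linear_combination 2 * h3 - (α x : ℝ) * h1
    have : 2 * (γ x : ℝ) = m * α x := by
      rcases mul_eq_zero.mp this with h | h <;> linarith
    exact_mod_cast this
  have hm4 : m ≤ 4 := by nlinarith
  interval_cases m
  · have : α = (2 : ℤ) • γ := by ext x; have := hx x; simp; linarith
    have := R.red γ hg.1 2 (this ▸ ha.1)
    omega
  · ext x; have := hx x; linarith
  · omega
  · have : γ = (2 : ℤ) • α := by ext x; have := hx x; simp; linarith
    have := R.red α ha.1 2 (this ▸ hg.1)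
    omega

theorem exists_simple [Module.Free ℤ L] [Module.Finite ℤ L] (R : RSys Ψ coroot s v)
    (x : (L →ₗ[ℤ] ℤ) →ₗ[ℤ] ℝ) {β} (hb : β ∈ RPos Ψ v) (hxb : x β < 0) :
    ∃ α ∈ RSimple Ψ s v, x α < 0 := by
  have hPfin : (RPos Ψ v).Finite := R.fin.subset fun a h => h.1
  obtain ⟨a0, ha0, hmin⟩ := Set.exists_min_image (RPos Ψ v) (fun a => x a / v a) hPfin ⟨β, hb⟩
  obtain ⟨r, hr⟩ : ∃ r, r = x a0 / v a0 := ⟨_, rfl⟩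
  simp only [← hr] at hmin
  let S := {a | a ∈ RPos Ψ v ∧ x a = r * v a}
  have hSfin : S.Finite := hPfin.subset fun a h => h.1
  have ha0S : a0 ∈ S := ⟨ha0, by rw [hr]; field_simp [ha0.2.ne']⟩
  have hge : ∀ a ∈ RPos Ψ v, r * v a ≤ x a := by
    intro a ha
    have := hmin a ha
    rwa [le_div_iff₀ ha.2] at this
  have hrneg : r < 0 := by
    have := hge β hb
    have := hb.2
    by_contra hc
    nlinarith
  let b := Module.Free.chooseBasis ℤ L
  obtain ⟨α, hα, hmax⟩ := Set.exists_max_image S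
    (fun a => ∑ i, ((a (b i) : ℝ) / v a) ^ 2) hSfin ⟨a0, ha0S⟩
  have pa := hα.1.2
  refine ⟨α, ⟨hα.1, ?_⟩, by rw [hα.2]; nlinarith⟩
  intro γ hγ hne
  by_contra hc
  have hmem := R.maps α hα.1.1 γ hγ.1
  have hδ := (R.pos_or hmem).resolve_left hc
  obtain ⟨δ, hδe⟩ : ∃ δ, δ = -(γ.comp (s α).toLinearMap) := ⟨_, rfl⟩
  rw [← hδe] at hδ
  rw [R.comp_eq hα.1.1] at hδe
  obtain ⟨n, hn⟩ : ∃ n, n = γ (coroot α) := ⟨_, rfl⟩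
  rw [← hn] at hδe
  have pg := hγ.2
  have pd := hδ.2
  have hvs : v δ = n * v α - v γ := by rw [hδe]; simp
  have hxs : x δ = n * x α - x γ := by rw [hδe]; simp
  have g1 := hge γ hγ
  have g2 := hge δ hδ
  have e1 : x γ = r * v γ := by
    have := hα.2
    rw [hxs, hvs, this] at g2
    linarith
  have e2 : x δ = r * v δ := by
    rw [hxs, hvs, hα.2, e1]; ring
  have q1 := hmax γ ⟨hγ, e1⟩
  have q2 := hmax δ ⟨hδ, e2⟩
  have hconv : ∀ i, v γ * ((γ (b i) : ℝ) / v γ) + v δ * ((δ (b i) : ℝ) / v δ)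
      = (v γ + v δ) * ((α (b i) : ℝ) / v α) := by
    intro i
    have : (v γ + v δ) = n * v α := by linarith
    rw [this]
    field_simp
    rw [hδe]; simp
  have key : ∑ i, (v γ * ((γ (b i) : ℝ) / v γ - (α (b i) : ℝ) / v α) ^ 2
      + v δ * ((δ (b i) : ℝ) / v δ - (α (b i) : ℝ) / v α) ^ 2) ≤ 0 := by
    have : ∀ i, (v γ * ((γ (b i) : ℝ) / v γ - (α (b i) : ℝ) / v α) ^ 2
      + v δ * ((δ (b i) : ℝ) / v δ - (α (b i) : ℝ) / v α) ^ 2)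
      = v γ * ((γ (b i) : ℝ) / v γ) ^ 2 + v δ * ((δ (b i) : ℝ) / v δ) ^ 2
        - (v γ + v δ) * ((α (b i) : ℝ) / v α) ^ 2 := by
      intro i
      linear_combination (-2 * ((α (b i) : ℝ) / v α)) * hconv i
    rw [Finset.sum_congr rfl fun i _ => this i]
    rw [Finset.sum_sub_distrib, Finset.sum_add_distrib, ← Finset.mul_sum, ← Finset.mul_sum,
      ← Finset.mul_sum]
    nlinarith
  have hnn : ∀ i ∈ Finset.univ, 0 ≤ (v γ * ((γ (b i) : ℝ) / v γ - (α (b i) : ℝ) / v α) ^ 2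
      + v δ * ((δ (b i) : ℝ) / v δ - (α (b i) : ℝ) / v α) ^ 2) := by
    intro i _; positivity
  have hz := (Finset.sum_eq_zero_iff_of_nonneg hnn).mp (le_antisymm key (Finset.sum_nonneg hnn))
  have hbas : ∀ i, v α * (γ (b i) : ℝ) = v γ * (α (b i) : ℝ) := by
    intro i
    have h1 := hz i (Finset.mem_univ i)
    have h2 : 0 ≤ v δ * ((δ (b i) : ℝ) / v δ - (α (b i) : ℝ) / v α) ^ 2 := by positivity
    have h3 : 0 ≤ v γ * ((γ (b i) : ℝ) / v γ - (α (b i) : ℝ) / v α) ^ 2 := by positivity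
    have h4 : v γ * ((γ (b i) : ℝ) / v γ - (α (b i) : ℝ) / v α) ^ 2 = 0 := by linarith
    have h5 : (γ (b i) : ℝ) / v γ - (α (b i) : ℝ) / v α = 0 := by
      rcases mul_eq_zero.mp h4 with h | h
      · linarith
      · exact pow_eq_zero_iff (two_ne_zero) |>.mp h
    have h6 := sub_eq_zero.mp h5
    rw [div_eq_div_iff pg.ne' pa.ne'] at h6
    linarith
  apply hne
  apply R.prop_eq hα.1 hγ
  intro y
  rw [← b.sum_repr y]
  simp only [map_sum, map_smul, smul_eq_mul]
  push_cast
  rw [Finset.mul_sum, Finset.mul_sum]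
  refine Finset.sum_congr rfl fun i _ => ?_
  linear_combination ((b.repr y i : ℤ) : ℝ) * hbas i

theorem refl_mem [Module.Free ℤ L] [Module.Finite ℤ L] (R : RSys Ψ coroot s v)
    {β} (hb : β ∈ RPos Ψ v) : s β ∈ Subgroup.closure (s '' RSimple Ψ s v) := by
  by_contra hbad
  have hBfin : ({b | b ∈ RPos Ψ v ∧ s b ∉ Subgroup.closure (s '' RSimple Ψ s v)}).Finite :=
    R.fin.subset fun a h => h.1.1
  obtain ⟨β, ⟨hb, hbad⟩, hmin⟩ := Set.exists_min_image _ (fun a => v a) hBfin ⟨β, hb, hbad⟩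
  let F := R.fin.toFinset
  let B : (L →ₗ[ℤ] ℤ) → (L →ₗ[ℤ] ℤ) → ℤ := fun γ β => ∑ d ∈ F, γ (coroot d) * β (coroot d)
  have hBinv : ∀ α ∈ Ψ, ∀ γ β, B (γ.comp (s α).toLinearMap) (β.comp (s α).toLinearMap) = B γ β := by
    intro α ha γ β
    apply Finset.sum_nbij' (fun d => d.comp (s α).toLinearMap) (fun d => d.comp (s α).toLinearMap)
    · intro d hd; simp only [F, Set.Finite.mem_toFinset] at hd ⊢; exact R.maps α ha d hd
    · intro d hd; simp only [F, Set.Finite.mem_toFinset] at hd ⊢; exact R.maps α ha d hd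
    · intro d hd; exact R.comp_comp ha d
    · intro d hd; exact R.comp_comp ha d
    · intro d hd
      simp only [F, Set.Finite.mem_toFinset] at hd
      rw [R.conj α ha d hd]; rfl
  have hBkey : ∀ α ∈ Ψ, ∀ γ, 2 * B γ α = γ (coroot α) * B α α := by
    intro α ha γ
    have h := hBinv α ha γ α
    rw [R.comp_self ha, R.comp_eq ha] at h
    have : B (γ - γ (coroot α) • α) (-α) = - B γ α + γ (coroot α) * B α α := by
      simp only [B, Finset.mul_sum, ← Finset.sum_neg_distrib, ← Finset.sum_add_distrib]
      refine Finset.sum_congr rfl fun d _ => ?_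
      simp; ring
    linarith
  have hBnn : ∀ α, 0 ≤ B α α := fun α => Finset.sum_nonneg fun d _ => mul_self_nonneg _
  have hBpos : 0 < B β β := by
    apply Finset.sum_pos' (fun d _ => mul_self_nonneg _)
    exact ⟨β, by simpa [F] using hb.1, by rw [R.two β hb.1]; norm_num⟩
  let x : (L →ₗ[ℤ] ℤ) →ₗ[ℤ] ℝ := AddMonoidHom.toIntLinearMap
    { toFun := fun γ => -(B β γ : ℝ)
      map_zero' := by simp [B]
      map_add' := by
        intro a c
        have : B β (a + c) = B β a + B β c := by
          simp only [B, ← Finset.sum_add_distrib]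
          refine Finset.sum_congr rfl fun d _ => ?_
          simp; ring
        rw [this]; push_cast; ring }
  have hx : ∀ γ, x γ = -(B β γ : ℝ) := fun γ => rfl
  obtain ⟨α, hα, hxα⟩ := R.exists_simple x hb (by rw [hx]; simpa using hBpos)
  have hBpa : 0 < B β α := by rw [hx] at hxα; simpa using hxα
  have hk := hBkey α hα.1.1 β
  have hpos : 0 < β (coroot α) := by
    by_contra hc
    have := hBnn α
    nlinarith
  have hsα : s α ∈ Subgroup.closure (s '' RSimple Ψ s v) :=
    Subgroup.subset_closure ⟨α, hα, rfl⟩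
  by_cases hne : β = α
  · rw [hne] at hbad; exact hbad hsα
  have hb' := hα.2 β hb hne
  have hlt : v (β.comp (s α).toLinearMap) < v β := by
    rw [R.comp_eq hα.1.1]
    have h1 : (0 : ℝ) < β (coroot α) := by exact_mod_cast hpos
    have h2 := hα.1.2
    simp only [map_sub, map_smul, zsmul_eq_mul]
    nlinarith [mul_pos h1 h2]
  have hmem : s (β.comp (s α).toLinearMap) ∈ Subgroup.closure (s '' RSimple Ψ s v) := by
    by_contra hc
    exact absurd (hmin _ ⟨hb', hc⟩) (not_le.mpr hlt)
  have := R.conj_s (s α) hb.1 hb'.1 (by rw [R.inv hα.1.1]) (R.conj α hα.1.1 β hb.1)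
  apply hbad
  have e : s β = (s α)⁻¹ * s (β.comp (s α).toLinearMap) * s α := by rw [this]; group
  rw [e]
  exact mul_mem (mul_mem (inv_mem hsα) hmem) hsα

theorem closure_le [Module.Free ℤ L] [Module.Finite ℤ L] (R : RSys Ψ coroot s v) :
    Subgroup.closure (s '' Ψ) ≤ Subgroup.closure (s '' RSimple Ψ s v) := by
  rw [Subgroup.closure_le]
  rintro _ ⟨α, ha, rfl⟩
  rcases R.pos_or ha with h | h
  · exact R.refl_mem h
  · rw [← R.s_neg ha]; exact R.refl_mem h

theorem list_mem (R : RSys Ψ coroot s v) : ∀ (l : List (L →ₗ[ℤ] ℤ)), (∀ a ∈ l, a ∈ Ψ) →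
    ∀ β ∈ Ψ, β.comp ((l.map s).prod⁻¹ : L ≃ₗ[ℤ] L).toLinearMap ∈ Ψ ∧
      coroot (β.comp ((l.map s).prod⁻¹ : L ≃ₗ[ℤ] L).toLinearMap) = (l.map s).prod (coroot β) := by
  intro l
  induction l with
  | nil =>
    intro _ β hb
    have : β.comp ((([] : List (L →ₗ[ℤ] ℤ)).map s).prod⁻¹ : L ≃ₗ[ℤ] L).toLinearMap = β := by
      ext x; simp
    rw [this]; exact ⟨hb, by simp⟩
  | cons a t ih =>
    intro hl β hb
    have ha := hl a (by simp)
    obtain ⟨h1, h2⟩ := ih (fun c hc => hl c (by simp [hc])) β hb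
    have : β.comp (((a :: t).map s).prod⁻¹ : L ≃ₗ[ℤ] L).toLinearMap
        = (β.comp ((t.map s).prod⁻¹ : L ≃ₗ[ℤ] L).toLinearMap).comp (s a).toLinearMap := by
      ext x
      simp only [List.map_cons, List.prod_cons, mul_inv_rev, R.inv ha]
      rfl
    rw [this]
    refine ⟨R.maps a ha _ h1, ?_⟩
    rw [R.conj a ha _ h1, h2]; simp

theorem exchange (R : RSys Ψ coroot s v) {α} (ha : α ∈ RSimple Ψ s v) :
    ∀ (l : List (L →ₗ[ℤ] ℤ)), (∀ a ∈ l, a ∈ RSimple Ψ s v) →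
    α.comp ((l.map s).prod⁻¹ : L ≃ₗ[ℤ] L).toLinearMap ∉ RPos Ψ v →
    ∃ l' : List (L →ₗ[ℤ] ℤ), (∀ a ∈ l', a ∈ RSimple Ψ s v) ∧ l'.length < l.length ∧
      (l.map s).prod * s α = (l'.map s).prod := by
  intro l
  induction l with
  | nil =>
    intro _ h
    exfalso; apply h
    have : α.comp ((([] : List (L →ₗ[ℤ] ℤ)).map s).prod⁻¹ : L ≃ₗ[ℤ] L).toLinearMap = α := by
      ext x; simp
    rw [this]; exact ha.1
  | cons a t ih =>
    intro hl h
    have haa := hl a (by simp)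
    have ht : ∀ c ∈ t, c ∈ RSimple Ψ s v := fun c hc => hl c (by simp [hc])
    have : α.comp (((a :: t).map s).prod⁻¹ : L ≃ₗ[ℤ] L).toLinearMap
        = (α.comp ((t.map s).prod⁻¹ : L ≃ₗ[ℤ] L).toLinearMap).comp (s a).toLinearMap := by
      ext x
      simp only [List.map_cons, List.prod_cons, mul_inv_rev, R.inv haa.1.1]
      rfl
    rw [this] at h
    by_cases hp : α.comp ((t.map s).prod⁻¹ : L ≃ₗ[ℤ] L).toLinearMap ∈ RPos Ψ v
    · have e : α.comp ((t.map s).prod⁻¹ : L ≃ₗ[ℤ] L).toLinearMap = a := by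
        by_contra hne
        exact h (haa.2 _ hp hne)
      have h2 := (R.list_mem t (fun c hc => (ht c hc).1.1) α ha.1.1).2
      rw [e] at h2
      have := R.conj_s (t.map s).prod ha.1.1 haa.1.1 e.symm h2
      refine ⟨t, ht, by simp, ?_⟩
      have h3 : (t.map s).prod * s α = s a * (t.map s).prod := by rw [this]; group
      rw [List.map_cons, List.prod_cons, mul_assoc, h3, ← mul_assoc, R.sq haa.1.1, one_mul]
    · obtain ⟨t', h1, h2, h3⟩ := ih ht hp
      refine ⟨a :: t', ?_, by simpa using h2, ?_⟩
      · intro c hc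
        rcases List.mem_cons.mp hc with rfl | hc
        · exact haa
        · exact h1 c hc
      · rw [List.map_cons, List.prod_cons, mul_assoc, h3, List.map_cons, List.prod_cons]

theorem list_one (R : RSys Ψ coroot s v) :
    ∀ (n : ℕ) (l : List (L →ₗ[ℤ] ℤ)), l.length = n → (∀ a ∈ l, a ∈ RSimple Ψ s v) →
    (∀ β ∈ RPos Ψ v, β.comp ((l.map s).prod⁻¹ : L ≃ₗ[ℤ] L).toLinearMap ∈ RPos Ψ v) →
    (l.map s).prod = 1 := by
  intro n
  induction n using Nat.strong_induction_on with
  | _ n ih =>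
    intro l hln hl hp
    rcases List.eq_nil_or_concat l with rfl | ⟨t, α, rfl⟩
    · simp
    · have ha : α ∈ RSimple Ψ s v := hl α (by simp)
      have ht : ∀ c ∈ t, c ∈ RSimple Ψ s v := fun c hc => hl c (by simp [hc])
      have h1 := hp α ha.1
      have e : ((t.concat α).map s).prod = (t.map s).prod * s α := by simp
      have e2 : α.comp (((t.concat α).map s).prod⁻¹ : L ≃ₗ[ℤ] L).toLinearMap
          = -(α.comp ((t.map s).prod⁻¹ : L ≃ₗ[ℤ] L).toLinearMap) := by
        rw [e, mul_inv_rev, R.inv ha.1.1]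
        change (α.comp (s α).toLinearMap).comp _ = _
        rw [R.comp_self ha.1.1]; rfl
      rw [e2] at h1
      have h2 : α.comp ((t.map s).prod⁻¹ : L ≃ₗ[ℤ] L).toLinearMap ∉ RPos Ψ v :=
        fun h => neg_notpos h h1
      obtain ⟨l', g1, g2, g3⟩ := R.exchange ha t ht h2
      rw [e, g3]
      refine ih l'.length ?_ l' rfl g1 ?_
      · rw [← hln]; simp; omega
      · rw [← g3, ← e]; exact hp

theorem exists_list (R : RSys Ψ coroot s v) {u} (hu : u ∈ Subgroup.closure (s '' RSimple Ψ s v)) :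
    ∃ l : List (L →ₗ[ℤ] ℤ), (∀ a ∈ l, a ∈ RSimple Ψ s v) ∧ u = (l.map s).prod := by
  induction hu using Subgroup.closure_induction_left with
  | one => exact ⟨[], by simp, by simp⟩
  | mul_left x hx y hy ih =>
    obtain ⟨a, ha, rfl⟩ := hx
    obtain ⟨l, h1, rfl⟩ := ih
    exact ⟨a :: l, by simpa using ⟨ha, h1⟩, by simp⟩
  | inv_mul_cancel x hx y hy ih =>
    obtain ⟨a, ha, rfl⟩ := hx
    obtain ⟨l, h1, rfl⟩ := ih
    exact ⟨a :: l, by simpa using ⟨ha, h1⟩, by simp [R.inv ha.1.1]⟩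

theorem eq_one [Module.Free ℤ L] [Module.Finite ℤ L] (R : RSys Ψ coroot s v)
    {u} (hu : u ∈ Subgroup.closure (s '' Ψ))
    (hp : ∀ β ∈ RPos Ψ v, β.comp (u⁻¹ : L ≃ₗ[ℤ] L).toLinearMap ∈ RPos Ψ v) : u = 1 := by
  obtain ⟨l, h1, rfl⟩ := R.exists_list (R.closure_le hu)
  exact R.list_one _ l rfl h1 hp

theorem trans [Module.Free ℤ L] [Module.Finite ℤ L] (R : RSys Ψ coroot s v) :
    ∀ (n : ℕ) (w : L ≃ₗ[ℤ] L), (∀ β ∈ Ψ, β.comp w.toLinearMap ∈ Ψ) →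
    ({γ | γ ∈ RPos Ψ v ∧ v (γ.comp w.toLinearMap) < 0}).ncard = n →
    ∃ u ∈ Subgroup.closure (s '' Ψ), ∀ β ∈ RPos Ψ v,
      β.comp (u * w : L ≃ₗ[ℤ] L).toLinearMap ∈ RPos Ψ v := by
  intro n
  induction n using Nat.strong_induction_on with
  | _ n ih =>
    intro w hw hn
    by_cases hex : ∃ β ∈ RPos Ψ v, v (β.comp w.toLinearMap) < 0
    · obtain ⟨β, hb, hxb⟩ := hex
      let x : (L →ₗ[ℤ] ℤ) →ₗ[ℤ] ℝ := v.comp (LinearMap.lcomp ℤ ℤ w.toLinearMap)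
      have hx : ∀ γ, x γ = v (γ.comp w.toLinearMap) := fun γ => rfl
      obtain ⟨α, hα, hxα⟩ := R.exists_simple x hb hxb
      have hc : ∀ γ : L →ₗ[ℤ] ℤ, γ.comp (s α * w : L ≃ₗ[ℤ] L).toLinearMap
        = (γ.comp (s α).toLinearMap).comp w.toLinearMap := fun γ => rfl
      have hinj : Function.Injective (fun γ : L →ₗ[ℤ] ℤ => γ.comp (s α).toLinearMap) := by
        intro a c h
        simp only at h
        rw [← R.comp_comp hα.1.1 a, h, R.comp_comp hα.1.1]
      have hlt : ({γ | γ ∈ RPos Ψ v ∧ v (γ.comp (s α * w : L ≃ₗ[ℤ] L).toLinearMap) < 0}).ncard < n := by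
        rw [← hn, ← Set.ncard_image_of_injective _ hinj]
        apply Set.ncard_lt_ncard _ (R.fin.subset fun a h => h.1.1)
        refine ⟨?_, ?_⟩
        · rintro _ ⟨γ, ⟨h1, h2⟩, rfl⟩
          refine ⟨hα.2 γ h1 ?_, h2⟩
          rintro rfl
          rw [hc, R.comp_self hα.1.1, ← hx, map_neg] at h2
          linarith
        · intro h
          obtain ⟨γ, ⟨h1, h2⟩, h3⟩ := h ⟨hα.1, hxα⟩
          simp only at h3
          have : γ = -α := by
            rw [← R.comp_comp hα.1.1 γ, h3, R.comp_self hα.1.1]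
          rw [this] at h1
          exact neg_notpos hα.1 h1
      obtain ⟨u, hu, h⟩ := ih _ hlt (s α * w)
        (fun β hb => by rw [hc]; exact hw _ (R.maps α hα.1.1 β hb)) rfl
      refine ⟨u * s α, mul_mem hu (Subgroup.subset_closure ⟨α, hα.1.1, rfl⟩), ?_⟩
      rw [mul_assoc]; exact h
    · push Not at hex
      refine ⟨1, one_mem _, ?_⟩
      rw [one_mul]
      intro β hb
      exact ⟨hw β hb.1, lt_of_le_of_ne (hex β hb) (R.hv _ (hw β hb.1)).symm⟩

end RSys

theorem comp_mul' {L : Type*} [AddCommGroup L] (β : L →ₗ[ℤ] ℤ) (a b : L ≃ₗ[ℤ] L) :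
    β.comp (a * b : L ≃ₗ[ℤ] L).toLinearMap = (β.comp a.toLinearMap).comp b.toLinearMap := rfl

theorem comp_one' {L : Type*} [AddCommGroup L] (β : L →ₗ[ℤ] ℤ) :
    β.comp (1 : L ≃ₗ[ℤ] L).toLinearMap = β := rfl

theorem image_eq_of_maps {L : Type*} [AddCommGroup L] (S : Set (L →ₗ[ℤ] ℤ)) (hS : S.Finite)
    (z : L ≃ₗ[ℤ] L) (h : ∀ β ∈ S, β.comp z.toLinearMap ∈ S) :
    (fun β : L →ₗ[ℤ] ℤ => β.comp ((z⁻¹ : L ≃ₗ[ℤ] L)).toLinearMap) '' S = S := by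
  have hinj : Function.Injective (fun γ : L →ₗ[ℤ] ℤ => γ.comp z.toLinearMap) := by
    intro a c h
    have := congrArg (fun f : L →ₗ[ℤ] ℤ => f.comp ((z⁻¹ : L ≃ₗ[ℤ] L)).toLinearMap) h
    simpa only [← comp_mul', mul_inv_cancel, comp_one'] using this
  have e : (fun γ : L →ₗ[ℤ] ℤ => γ.comp z.toLinearMap) '' S = S := by
    apply Set.eq_of_subset_of_ncard_le _ _ hS
    · rintro _ ⟨b, hb, rfl⟩; exact h b hb
    · rw [Set.ncard_image_of_injective _ hinj]
  conv_lhs => rw [← e]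
  rw [Set.image_image]
  simp only [← comp_mul', mul_inv_cancel, comp_one', Set.image_id']


/- STATEMENT 10: The stabilizer `W_λ` is the semidirect product of `W_λ⁰` by `W_λ¹`:
`W_λ⁰` is a normal subgroup of `W_λ`, `W_λ¹` is a subgroup of `W_λ`,
`W_λ⁰ ∩ W_λ¹ = {1}`, and every element `w ∈ W_λ` factors uniquely as `w = u·v` with
`u ∈ W_λ⁰` and `v ∈ W_λ¹`.

Here `L` is a free ℤ-module of finite rank, `Φ ⊆ Hom(L, ℤ) \ {0}` is a finite reduced
crystallographic root system with coroots `coroot α ∈ L` satisfying `α (coroot α) = 2`,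
reflections `s_α(x) = x - α(x) • α^∨` with `β ∘ s_α ∈ Φ` for all `β ∈ Φ`, and the
coroot of `β ∘ s_α⁻¹` is `s_α (β^∨)`. `W ≤ Aut(L)` is generated by the `s_α`; it acts
on characters `λ : L → ℂˣ` by `(w·λ)(x) = λ(w⁻¹ x)` and on roots by `w·β = β ∘ w⁻¹`.
`W_λ` is the stabilizer of `λ`, `Φ_λ⁰ := {α ∈ Φ | λ(α^∨) = 1}`,
`W_λ⁰ := ⟨s_α : α ∈ Φ_λ⁰⟩`; a generic `v ∈ L ⊗ ℝ` (encoded, using that `L` is finite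
free, as a ℤ-linear functional `v` on `Hom(L, ℤ)` with values in ℝ) with `α(v) ≠ 0`
for all `α ∈ Φ_λ⁰` cuts out `(Φ_λ⁰)⁺ := {α ∈ Φ_λ⁰ | α(v) > 0}`, and
`W_λ¹ := {w ∈ W_λ | w·(Φ_λ⁰)⁺ = (Φ_λ⁰)⁺}`. -/
theorem stabilizer_semidirect_product
    (L : Type*) [AddCommGroup L] [Module.Free ℤ L] [Module.Finite ℤ L]
    (Φ : Set (L →ₗ[ℤ] ℤ)) (hfin : Φ.Finite) (h0 : (0 : L →ₗ[ℤ] ℤ) ∉ Φ)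
    (coroot : (L →ₗ[ℤ] ℤ) → L)
    (hcoroot : ∀ α ∈ Φ, α (coroot α) = 2)
    (s : (L →ₗ[ℤ] ℤ) → (L ≃ₗ[ℤ] L))
    (hs : ∀ α ∈ Φ, ∀ x : L, s α x = x - α x • coroot α)
    (hmaps : ∀ α ∈ Φ, ∀ β ∈ Φ, β.comp (s α).toLinearMap ∈ Φ)
    (hred : ∀ α ∈ Φ, ∀ t : ℤ, t • α ∈ Φ → t = 1 ∨ t = -1)
    (hcorootconj : ∀ α ∈ Φ, ∀ β ∈ Φ,
      coroot (β.comp ((s α)⁻¹ : L ≃ₗ[ℤ] L).toLinearMap) = s α (coroot β))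
    (W : Subgroup (L ≃ₗ[ℤ] L)) (hW : W = Subgroup.closure (s '' Φ))
    (lam : L → ℂˣ) (hlam : ∀ x y : L, lam (x + y) = lam x * lam y)
    (Wlam : Set (L ≃ₗ[ℤ] L))
    (hWlam : Wlam = {w | w ∈ W ∧ ∀ x : L, lam ((w⁻¹ : L ≃ₗ[ℤ] L) x) = lam x})
    (Φlam0 : Set (L →ₗ[ℤ] ℤ)) (hΦlam0 : Φlam0 = {α ∈ Φ | lam (coroot α) = 1})
    (Wlam0 : Subgroup (L ≃ₗ[ℤ] L)) (hWlam0 : Wlam0 = Subgroup.closure (s '' Φlam0))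
    (v : (L →ₗ[ℤ] ℤ) →ₗ[ℤ] ℝ) (hv : ∀ α ∈ Φlam0, v α ≠ 0)
    (Φlam0plus : Set (L →ₗ[ℤ] ℤ)) (hΦlam0plus : Φlam0plus = {α ∈ Φlam0 | 0 < v α})
    (Wlam1 : Set (L ≃ₗ[ℤ] L))
    (hWlam1 : Wlam1 = {w | w ∈ Wlam ∧
      (fun β : L →ₗ[ℤ] ℤ => β.comp ((w⁻¹ : L ≃ₗ[ℤ] L)).toLinearMap) '' Φlam0plus
        = Φlam0plus}) :
    -- W_λ⁰ is a normal subgroup of W_λ: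
    ((∀ u ∈ Wlam0, u ∈ Wlam) ∧ (∀ w ∈ Wlam, ∀ u ∈ Wlam0, w * u * w⁻¹ ∈ Wlam0)) ∧
    -- W_λ¹ is a subgroup of W_λ:
    ((1 : L ≃ₗ[ℤ] L) ∈ Wlam1 ∧ (∀ a ∈ Wlam1, ∀ b ∈ Wlam1, a * b ∈ Wlam1) ∧
      (∀ a ∈ Wlam1, a⁻¹ ∈ Wlam1)) ∧
    -- W_λ⁰ ∩ W_λ¹ = {1}:
    (∀ x : L ≃ₗ[ℤ] L, x ∈ Wlam0 → x ∈ Wlam1 → x = 1) ∧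
    -- unique factorization w = u·v with u ∈ W_λ⁰ and v ∈ W_λ¹:
    (∀ w ∈ Wlam, ∃! p : (L ≃ₗ[ℤ] L) × (L ≃ₗ[ℤ] L),
      p.1 ∈ Wlam0 ∧ p.2 ∈ Wlam1 ∧ w = p.1 * p.2) := by
  have hsinv : ∀ α ∈ Φ, (s α)⁻¹ = s α := fun α ha => refl_inv α _ _ (hcoroot α ha) (hs α ha)
  have hWact : ∀ w ∈ W, ∀ β ∈ Φ, β.comp (w⁻¹ : L ≃ₗ[ℤ] L).toLinearMap ∈ Φ ∧
      coroot (β.comp (w⁻¹ : L ≃ₗ[ℤ] L).toLinearMap) = w (coroot β) := by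
    intro w hw
    rw [hW] at hw
    have step : ∀ α ∈ Φ, ∀ y : L ≃ₗ[ℤ] L,
        (∀ β ∈ Φ, β.comp (y⁻¹ : L ≃ₗ[ℤ] L).toLinearMap ∈ Φ ∧
          coroot (β.comp (y⁻¹ : L ≃ₗ[ℤ] L).toLinearMap) = y (coroot β)) →
        ∀ β ∈ Φ, β.comp ((s α * y)⁻¹ : L ≃ₗ[ℤ] L).toLinearMap ∈ Φ ∧
          coroot (β.comp ((s α * y)⁻¹ : L ≃ₗ[ℤ] L).toLinearMap) = (s α * y) (coroot β) := by
      intro α ha y ih β hb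
      obtain ⟨h1, h2⟩ := ih β hb
      rw [mul_inv_rev, comp_mul']
      refine ⟨?_, ?_⟩
      · rw [hsinv α ha]; exact hmaps α ha _ h1
      · rw [hcorootconj α ha _ h1, h2]; rfl
    induction hw using Subgroup.closure_induction_left with
    | one => intro β hb; rw [inv_one, comp_one']; exact ⟨hb, rfl⟩
    | mul_left x hx y hy ih =>
      obtain ⟨a, ha, rfl⟩ := hx
      exact step a ha y ih
    | inv_mul_cancel x hx y hy ih =>
      obtain ⟨a, ha, rfl⟩ := hx
      rw [hsinv a ha]
      exact step a ha y ih
  let φ : L →+ Additive ℂˣ := AddMonoidHom.mk' (fun x => Additive.ofMul (lam x))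
    (fun x y => by rw [hlam]; rfl)
  have hφ : ∀ x, φ x = Additive.ofMul (lam x) := fun x => rfl
  have hlams : ∀ α ∈ Φlam0, ∀ x, lam (s α x) = lam x := by
    intro α ha x
    rw [hΦlam0] at ha
    apply Additive.ofMul.injective
    rw [← hφ, ← hφ, hs α ha.1, map_sub, map_zsmul, hφ (coroot α), ha.2]
    simp
  have hsub : Φlam0 ⊆ Φ := by rw [hΦlam0]; exact fun a h => h.1
  -- the subgroup W_λ
  let WL : Subgroup (L ≃ₗ[ℤ] L) :=
    { carrier := Wlam
      one_mem' := by rw [hWlam]; exact ⟨one_mem _, fun x => by simp⟩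
      mul_mem' := by
        intro a b ha hb
        rw [hWlam] at ha hb ⊢
        refine ⟨mul_mem ha.1 hb.1, fun x => ?_⟩
        rw [mul_inv_rev, LinearEquiv.mul_apply, hb.2, ha.2]
      inv_mem' := by
        intro a ha
        rw [hWlam] at ha ⊢
        refine ⟨inv_mem ha.1, fun x => ?_⟩
        rw [← ha.2, ← LinearEquiv.mul_apply, mul_inv_cancel]
        rfl }
  have hWLmem : ∀ w, w ∈ WL ↔ w ∈ Wlam := fun w => Iff.rfl
  have hWL0 : Wlam0 ≤ WL := by
    rw [hWlam0, Subgroup.closure_le]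
    rintro _ ⟨α, ha, rfl⟩
    change s α ∈ Wlam
    rw [hWlam]
    refine ⟨by rw [hW]; exact Subgroup.subset_closure ⟨α, hsub ha, rfl⟩, fun x => ?_⟩
    rw [hsinv α (hsub ha)]; exact hlams α ha x
  have hlamw : ∀ w ∈ Wlam, ∀ x, lam (w x) = lam x := by
    intro w hw x
    have h := WL.inv_mem ((hWLmem w).2 hw)
    rw [hWLmem, hWlam] at h
    simpa using h.2 x
  have hact0 : ∀ w ∈ Wlam, ∀ β ∈ Φlam0, β.comp (w⁻¹ : L ≃ₗ[ℤ] L).toLinearMap ∈ Φlam0 ∧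
      coroot (β.comp (w⁻¹ : L ≃ₗ[ℤ] L).toLinearMap) = w (coroot β) := by
    intro w hw β hb
    have hwW : w ∈ W := by rw [hWlam] at hw; exact hw.1
    obtain ⟨h1, h2⟩ := hWact w hwW β (hsub hb)
    refine ⟨?_, h2⟩
    have h3 := hlamw w hw (coroot β)
    rw [hΦlam0] at hb ⊢
    exact ⟨h1, by rw [h2, h3]; exact hb.2⟩
  have hs0 : ∀ α ∈ Φlam0, s α ∈ Wlam := fun α ha =>
    hWL0 (by rw [hWlam0]; exact Subgroup.subset_closure ⟨α, ha, rfl⟩)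
  have R : RSys Φlam0 coroot s v :=
    { fin := hfin.subset hsub
      two := fun α ha => hcoroot α (hsub ha)
      hs := fun α ha => hs α (hsub ha)
      maps := fun α ha β hb => by
        have := (hact0 _ (hs0 α ha) β hb).1
        rwa [hsinv α (hsub ha)] at this
      red := fun α ha t ht => hred α (hsub ha) t (hsub ht)
      conj := fun α ha β hb => by
        have := (hact0 _ (hs0 α ha) β hb).2
        rwa [hsinv α (hsub ha)] at this
      hv := hv }
  have hPos : Φlam0plus = RPos Φlam0 v := hΦlam0plus
  have hPfin : Φlam0plus.Finite := by rw [hPos]; exact R.fin.subset fun a h => h.1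
  have hW1 : ∀ z, z ∈ Wlam1 ↔ z ∈ WL ∧ ∀ β ∈ Φlam0plus, β.comp z.toLinearMap ∈ Φlam0plus := by
    intro z
    rw [hWlam1]
    constructor
    · rintro ⟨h1, h2⟩
      refine ⟨h1, fun β hb => ?_⟩
      rw [← h2] at hb
      obtain ⟨γ, hg, rfl⟩ := hb
      simpa only [← comp_mul', inv_mul_cancel, comp_one'] using hg
    · rintro ⟨h1, h2⟩
      exact ⟨h1, image_eq_of_maps _ hPfin z h2⟩
  have hW1inv : ∀ z ∈ Wlam1, ∀ β ∈ Φlam0plus,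
      β.comp (z⁻¹ : L ≃ₗ[ℤ] L).toLinearMap ∈ Φlam0plus := by
    intro z hz β hb
    rw [hWlam1] at hz
    rw [← hz.2]
    exact ⟨β, hb, rfl⟩
  let W1 : Subgroup (L ≃ₗ[ℤ] L) :=
    { carrier := Wlam1
      one_mem' := by
        rw [hW1]; exact ⟨one_mem _, fun β hb => by rw [comp_one']; exact hb⟩
      mul_mem' := by
        intro a b ha hb
        rw [hW1] at ha hb ⊢
        exact ⟨mul_mem ha.1 hb.1, fun β h => by rw [comp_mul']; exact hb.2 _ (ha.2 _ h)⟩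
      inv_mem' := by
        intro a ha
        rw [hW1]
        exact ⟨inv_mem ((hW1 a).1 ha).1, hW1inv a ha⟩ }
  have hint : ∀ x : L ≃ₗ[ℤ] L, x ∈ Wlam0 → x ∈ Wlam1 → x = 1 := by
    intro x hx0 hx1
    rw [hWlam0] at hx0
    apply R.eq_one hx0
    have := hW1inv x hx1
    rwa [hPos] at this
  refine ⟨⟨fun u hu => hWL0 hu, ?_⟩, ⟨W1.one_mem, fun a ha b hb => W1.mul_mem ha hb,
    fun a ha => W1.inv_mem ha⟩, hint, ?_⟩
  · intro w hw u hu
    have : Wlam0 ≤ Wlam0.comap (MulAut.conj w).toMonoidHom := by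
      conv_lhs => rw [hWlam0]
      rw [Subgroup.closure_le]
      rintro _ ⟨α, ha, rfl⟩
      change w * s α * w⁻¹ ∈ Wlam0
      obtain ⟨h1, h2⟩ := hact0 w hw α ha
      rw [← R.conj_s w ha h1 rfl h2, hWlam0]
      exact Subgroup.subset_closure ⟨_, h1, rfl⟩
    exact this hu
  · intro w hw
    obtain ⟨u, hu, h⟩ := R.trans _ w (fun β hb => by
      have := (hact0 _ (WL.inv_mem ((hWLmem w).2 hw)) β hb).1
      rwa [inv_inv] at this) rfl
    rw [← hWlam0] at hu
    rw [← hPos] at h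
    refine ⟨(u⁻¹, u * w), ⟨inv_mem hu, ?_, by simp⟩, ?_⟩
    · exact (hW1 _).2 ⟨WL.mul_mem (hWL0 hu) hw, h⟩
    · rintro ⟨a, b⟩ ⟨h1, h2, h3⟩
      simp only at h1 h2 h3
      have hz : u * w ∈ W1 := (hW1 _).2 ⟨WL.mul_mem (hWL0 hu) hw, h⟩
      have hb : b ∈ W1 := h2
      have e : u * a = (u * w) * b⁻¹ := by rw [h3]; group
      have h4 := hint (u * a) (mul_mem hu h1) (by rw [e]; exact W1.mul_mem hz (W1.inv_mem hb))
      have h5 : a = u⁻¹ := eq_inv_of_mul_eq_one_right h4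
      have h6 : b = u * w := by rw [h3, h5]; group
      rw [h5, h6]
end
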